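/- Let 1<p<∞ with conjugate exponent q (1/p+1/q=1), and let w be a non-increasing positive function on I=(0,a), 0<a≤∞, with W(t)=∫₀ᵗ w dm finite on I. For a measurable function f on I, suppose N(f) := sup{ ∫_I |f·g| dm : g measurable on I, ∫_I (g*)^p w dm ≤ 1 } is finite. Then N(f) = inf{ (∫_I (g*)^q w^{1−q} dm)^{1/q} : g measurable on I with locally integrable g* and f ≺ g }; that is, the Köthe dual norm of the classical Lorentz space Λ_{p,w} is given by this infimum. -/

import Mathlib

open MeasureTheory Set Filter
open scoped ENNReal

/-- The interval `(0, a)` for `a : ℝ≥0∞` (equals `(0,∞)` when `a = ∞`). -/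
def Iset (a : ℝ≥0∞) : Set ℝ := {x : ℝ | 0 < x ∧ ENNReal.ofReal x < a}

/-- Lebesgue measure restricted to the interval `(0,a)`. -/
noncomputable def volI (a : ℝ≥0∞) : Measure ℝ := volume.restrict (Iset a)

/-- Decreasing rearrangement of an `ℝ≥0∞`-valued function with respect to a measure `μ`:
`f^{*,μ}(t) = inf {s > 0 : μ({f > s}) ≤ t}`. -/
noncomputable def rearrE (μ : Measure ℝ) (f : ℝ → ℝ≥0∞) (t : ℝ) : ℝ≥0∞ :=
  sInf {s : ℝ≥0∞ | 0 < s ∧ μ {x | s < f x} ≤ ENNReal.ofReal t}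

/-- Decreasing rearrangement of a real function with respect to a measure `μ` on `ℝ`:
`f^{*,μ}(t) = inf {s > 0 : μ({|f| > s}) ≤ t}`. -/
noncomputable def rearr (μ : Measure ℝ) (f : ℝ → ℝ) (t : ℝ) : ℝ≥0∞ :=
  rearrE μ (fun x => ENNReal.ofReal |f x|) t

/-- The measure `w·dm` on the set `I`. -/
noncomputable def wMeas (I : Set ℝ) (w : ℝ → ℝ) : Measure ℝ :=
  (volume.restrict I).withDensity (fun t => ENNReal.ofReal (w t))

/-- `W(t) = ∫₀ᵗ w dm`. -/
noncomputable def Wfun (w : ℝ → ℝ) (t : ℝ) : ℝ := ∫ s in Set.Ioo (0:ℝ) t, w s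

/-- `b = ∫_I w dm` as an extended real number. -/
noncomputable def bval (a : ℝ≥0∞) (w : ℝ → ℝ) : ℝ≥0∞ := ∫⁻ x in Iset a, ENNReal.ofReal (w x)

/-- The Köthe dual norm of the Lorentz space `Λ_{p,w}`:
`N(f) = sup { ∫_I |f·g| dm : ∫_I (g*)^p w dm ≤ 1 }`. -/
noncomputable def lorentzDualNorm (a : ℝ≥0∞) (w : ℝ → ℝ) (p : ℝ) (f : ℝ → ℝ) : ℝ≥0∞ :=
  sSup {c : ℝ≥0∞ | ∃ g : ℝ → ℝ, Measurable g ∧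
    (∫⁻ t in Iset a, rearr (volI a) g t ^ p * ENNReal.ofReal (w t)) ≤ 1 ∧
    c = ∫⁻ x in Iset a, ENNReal.ofReal |f x * g x|}

theorem measurableSet_Iset (x : ℝ≥0∞) : MeasurableSet (Iset x) := by
  have : Iset x = Ioi 0 ∩ {t | ENNReal.ofReal t < x} := rfl
  rw [this]
  exact measurableSet_Ioi.inter (measurableSet_lt ENNReal.measurable_ofReal measurable_const)

theorem Iset_top : Iset ⊤ = Ioi 0 := by
  ext t; simp [Iset]

theorem Iset_ofReal {x : ℝ} (hx : 0 ≤ x) : Iset (ENNReal.ofReal x) = Ioo 0 x := by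
  ext t
  simp only [Iset, mem_ofPred_eq, mem_Ioo]
  constructor
  · rintro ⟨h1, h2⟩
    exact ⟨h1, (ENNReal.ofReal_lt_ofReal_iff_of_nonneg h1.le).1 h2⟩
  · rintro ⟨h1, h2⟩
    exact ⟨h1, (ENNReal.ofReal_lt_ofReal_iff_of_nonneg h1.le).2 h2⟩

theorem vol_Iset (x : ℝ≥0∞) : volume (Iset x) = x := by
  by_cases h : x = ⊤
  · rw [h, Iset_top]; simp
  · rw [← ENNReal.ofReal_toReal h, Iset_ofReal ENNReal.toReal_nonneg]; simp

theorem Iset_mono {x y : ℝ≥0∞} (h : x ≤ y) : Iset x ⊆ Iset y := fun _ ht => ⟨ht.1, ht.2.trans_le h⟩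

theorem Iset_inter (x y : ℝ≥0∞) : Iset x ∩ Iset y = Iset (min x y) := by
  ext t; simp only [Iset, mem_inter_iff, mem_ofPred_eq, lt_min_iff]; tauto

theorem lt_meas_exists (μ : Measure ℝ) (f : ℝ → ℝ≥0∞) (s c : ℝ≥0∞) (h : c < μ {x | s < f x}) :
    ∃ s', s < s' ∧ c < μ {x | s' < f x} := by
  have hs : s ≠ ⊤ := by
    rintro rfl
    simp at h
  obtain ⟨u, hu, hu2, hu3⟩ := exists_seq_strictAnti_tendsto' (show s < ⊤ from lt_top_iff_ne_top.2 hs)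
  have hU : {x | s < f x} = ⋃ n, {x | u n < f x} := by
    ext x
    simp only [mem_ofPred_eq, mem_iUnion]
    constructor
    · intro hx
      exact (hu3.eventually_lt_const hx).exists
    · rintro ⟨n, hn⟩
      exact (hu2 n).1.trans hn
  have hm : Monotone fun n => {x | u n < f x} := by
    intro m n hmn x hx
    exact (hu.antitone hmn).trans_lt hx
  rw [hU, hm.measure_iUnion] at h
  obtain ⟨n, hn⟩ := lt_iSup_iff.1 h
  exact ⟨u n, (hu2 n).1, hn⟩

theorem lt_rearrE (μ : Measure ℝ) (f : ℝ → ℝ≥0∞) (s : ℝ≥0∞) (t : ℝ) :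
    s < rearrE μ f t ↔ ENNReal.ofReal t < μ {x | s < f x} := by
  constructor
  · intro h
    by_contra! hc
    rcases eq_or_ne s 0 with rfl | hs
    · have : rearrE μ f t ≤ 0 := by
        refine le_of_forall_gt fun r hr => ?_
        obtain ⟨r', h1, h2⟩ := exists_between hr
        refine lt_of_le_of_lt (sInf_le ⟨h1, ?_⟩) h2
        exact (measure_mono fun x (hx : r' < f x) => h1.trans hx).trans hc
      exact absurd h (not_lt.2 this)
    · exact absurd h (not_lt.2 (sInf_le ⟨pos_iff_ne_zero.2 hs, hc⟩))
  · intro h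
    obtain ⟨s', h1, h2⟩ := lt_meas_exists μ f s _ h
    refine h1.trans_le (le_sInf ?_)
    rintro r ⟨_, hr⟩
    by_contra! hc
    exact absurd (h2.trans_le ((measure_mono fun x (hx : s' < f x) => hc.trans hx).trans hr)) (lt_irrefl _)

theorem rearrE_antitone (μ : Measure ℝ) (f : ℝ → ℝ≥0∞) : Antitone (rearrE μ f) := by
  intro t t' h
  refine le_of_forall_lt fun s hs => ?_
  rw [lt_rearrE] at hs ⊢
  exact (ENNReal.ofReal_le_ofReal h).trans_lt hs

theorem rearrE_measurable (μ : Measure ℝ) (f : ℝ → ℝ≥0∞) : Measurable (rearrE μ f) :=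
  (rearrE_antitone μ f).measurable

theorem rearrE_mono (μ : Measure ℝ) {f g : ℝ → ℝ≥0∞} (h : ∀ x, f x ≤ g x) (t : ℝ) :
    rearrE μ f t ≤ rearrE μ g t := by
  refine le_of_forall_lt fun s hs => ?_
  rw [lt_rearrE] at hs ⊢
  exact hs.trans_le (measure_mono fun x hx => lt_of_lt_of_le hx (h x))

theorem volI_le (a : ℝ≥0∞) (s : Set ℝ) : volI a s ≤ a := by
  calc volI a s ≤ volI a univ := measure_mono (subset_univ _)
    _ = a := by simp [volI, vol_Iset]

theorem rearrE_eq_zero (a : ℝ≥0∞) (f : ℝ → ℝ≥0∞) {t : ℝ} (h : a ≤ ENNReal.ofReal t) :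
    rearrE (volI a) f t = 0 := by
  by_contra hc
  have := (lt_rearrE _ _ _ _).1 (pos_iff_ne_zero.2 hc)
  exact absurd (this.trans_le (volI_le a _)) (not_lt.2 h)

instance (a : ℝ≥0∞) : SFinite (volI a) := by unfold volI; infer_instance

theorem layer (μ : Measure ℝ) [SFinite μ] (u v : ℝ → ℝ≥0∞) (hu : Measurable u) (hv : Measurable v) :
    ∫⁻ x, u x * v x ∂μ = ∫⁻ s in Ioi (0:ℝ), ∫⁻ x in {x | ENNReal.ofReal s < v x}, u x ∂μ := by
  have h1 : ∀ x, u x * v x = ∫⁻ s in Ioi (0:ℝ), ({s | ENNReal.ofReal s < v x}.indicator (fun _ => u x) s) := by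
    intro x
    have hms : MeasurableSet {s : ℝ | ENNReal.ofReal s < v x} :=
      measurableSet_lt ENNReal.measurable_ofReal measurable_const
    rw [lintegral_indicator hms, setLIntegral_const, Measure.restrict_apply hms]
    congr 1
    have : {s : ℝ | ENNReal.ofReal s < v x} ∩ Ioi 0 = Iset (v x) := by
      ext s; simp [Iset, and_comm]
    rw [this, vol_Iset]
  simp_rw [h1]
  rw [lintegral_lintegral_swap]
  · refine lintegral_congr fun s => ?_
    have hms : MeasurableSet {x : ℝ | ENNReal.ofReal s < v x} :=
      measurableSet_lt measurable_const hv
    rw [← lintegral_indicator hms]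
    rfl
  · have hm : MeasurableSet {z : ℝ × ℝ | ENNReal.ofReal z.2 < v z.1} :=
      measurableSet_lt (ENNReal.measurable_ofReal.comp measurable_snd) (hv.comp measurable_fst)
    exact ((hu.comp measurable_fst).indicator hm).aemeasurable

theorem layer1 (μ : Measure ℝ) [SFinite μ] (v : ℝ → ℝ≥0∞) (hv : Measurable v) :
    ∫⁻ x, v x ∂μ = ∫⁻ s in Ioi (0:ℝ), μ {x | ENNReal.ofReal s < v x} := by
  have := layer μ (fun _ => 1) v measurable_const hv
  simpa using this

theorem lint_rearrE (μ : Measure ℝ) (f : ℝ → ℝ≥0∞) (x : ℝ≥0∞) :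
    ∫⁻ t in Iset x, rearrE μ f t
      = ∫⁻ s in Ioi (0:ℝ), min x (μ {y | ENNReal.ofReal s < f y}) := by
  rw [layer1 _ _ (rearrE_measurable μ f)]
  refine lintegral_congr fun s => ?_
  rw [Measure.restrict_apply (measurableSet_lt measurable_const (rearrE_measurable μ f))]
  rw [← vol_Iset (min x _), ← Iset_inter]
  congr 1
  ext t
  simp only [Iset, mem_inter_iff, mem_ofPred_eq, lt_rearrE]
  tauto

theorem HL1 (μ : Measure ℝ) [SFinite μ] (f : ℝ → ℝ≥0∞) (hf : Measurable f) (E : Set ℝ) :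
    ∫⁻ x in E, f x ∂μ ≤ ∫⁻ t in Iset (μ E), rearrE μ f t := by
  rw [lint_rearrE, layer1 _ _ hf]
  refine lintegral_mono fun s => ?_
  rw [Measure.restrict_apply (measurableSet_lt measurable_const hf)]
  exact le_min (measure_mono inter_subset_right) (measure_mono inter_subset_left)

/-- Hardy-Littlewood plus Hardy. -/
theorem HL2 (a : ℝ≥0∞) (f u v : ℝ → ℝ≥0∞) (hf : Measurable f) (hu : Measurable u)
    (hfv : ∀ x : ℝ, 0 < x → ∫⁻ t in Set.Ioo 0 x, rearrE (volI a) f t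
      ≤ ∫⁻ t in Set.Ioo 0 x, rearrE (volI a) v t) :
    ∫⁻ x in Iset a, f x * u x ≤ ∫⁻ t in Iset a, rearrE (volI a) v t * rearrE (volI a) u t := by
  have key : ∀ y : ℝ≥0∞, ∫⁻ t in Iset y, rearrE (volI a) f t ≤ ∫⁻ t in Iset y, rearrE (volI a) v t := by
    intro y
    have hfin : ∀ y : ℝ≥0∞, y ≠ ⊤ → ∫⁻ t in Iset y, rearrE (volI a) f t ≤ ∫⁻ t in Iset y, rearrE (volI a) v t := by
      intro y hy
      rcases eq_or_ne y 0 with rfl | h0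
      · simp [Iset]
      · rw [← ENNReal.ofReal_toReal hy, Iset_ofReal ENNReal.toReal_nonneg]
        exact hfv _ (ENNReal.toReal_pos h0 hy)
    by_cases hy : y = ⊤
    · subst hy
      have hU : Iset ⊤ = ⋃ n : ℕ, Iset (n : ℝ≥0∞) := by
        ext t
        simp only [Iset, mem_ofPred_eq, mem_iUnion]
        constructor
        · rintro ⟨h1, h2⟩
          obtain ⟨n, hn⟩ := ENNReal.exists_nat_gt h2.ne
          exact ⟨n, h1, hn⟩
        · rintro ⟨n, h1, h2⟩
          exact ⟨h1, ENNReal.ofReal_lt_top⟩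
      have hmono : Monotone fun n : ℕ => Iset (n : ℝ≥0∞) := fun m n h => Iset_mono (by exact_mod_cast h)
      rw [hU, setLIntegral_iUnion_of_directed _ hmono.directed_le]
      refine iSup_le fun n => ?_
      exact (hfin n (by simp)).trans (lintegral_mono_set (subset_iUnion (fun n : ℕ => Iset (n : ℝ≥0∞)) n))
    · exact hfin y hy
  have e1 : ∫⁻ x in Iset a, f x * u x = ∫⁻ x, f x * u x ∂(volI a) := rfl
  have e2 : ∫⁻ t in Iset a, rearrE (volI a) v t * rearrE (volI a) u t
      = ∫⁻ t, rearrE (volI a) v t * rearrE (volI a) u t ∂(volI a) := rfl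
  rw [e1, e2, layer _ _ _ hf hu, layer _ _ _ (rearrE_measurable _ _) (rearrE_measurable _ _)]
  refine lintegral_mono fun s => ?_
  refine (HL1 _ _ hf _).trans ((key _).trans ?_)
  have hm : MeasurableSet {x | ENNReal.ofReal s < rearrE (volI a) u x} :=
    measurableSet_lt measurable_const (rearrE_measurable _ _)
  have e3 : (volI a).restrict {x | ENNReal.ofReal s < rearrE (volI a) u x}
      = volume.restrict ({x | ENNReal.ofReal s < rearrE (volI a) u x} ∩ Iset a) :=
    Measure.restrict_restrict hm
  rw [e3]
  refine lintegral_mono_set ?_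
  intro t ht
  refine ⟨?_, ht.1, ht.2.trans_le (volI_le a _)⟩
  simp only [mem_ofPred_eq, lt_rearrE]
  exact ht.2

theorem sig1 (μ : Measure ℝ) (k : ℝ → ℝ≥0∞)
    (hnt : ∀ s, 0 < s → μ {x | k x = s} = 0) (t : ℝ≥0∞) :
    μ {x | 0 < k x ∧ μ {y | k x < k y} < t} ≤ t := by
  set d : ℝ≥0∞ → ℝ≥0∞ := fun s => μ {y | s < k y} with hd
  have hda : Antitone d := fun s s' h => measure_mono fun y (hy : s' < k y) => h.trans_lt hy
  set T : Set ℝ≥0∞ := {s | 0 < s ∧ d s < t} with hT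
  set s0 := sInf T with hs0
  have hds0 : d s0 ≤ t := by
    by_contra! hc
    obtain ⟨s', h1, h2⟩ := lt_meas_exists μ k s0 t hc
    obtain ⟨s, hs, hss⟩ := sInf_lt_iff.1 h1
    exact absurd (h2.trans_le (hda hss.le)) (not_lt.2 hs.2.le)
  have hsub : {x | 0 < k x ∧ μ {y | k x < k y} < t} ⊆ {x | s0 < k x} ∪ {x | 0 < s0 ∧ k x = s0} := by
    rintro x ⟨h1, h2⟩
    have hx : k x ∈ T := ⟨h1, h2⟩
    rcases (sInf_le hx).lt_or_eq with h | h
    · left; exact h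
    · right
      have h' : s0 = k x := h
      exact ⟨h' ▸ h1, h'.symm⟩
  refine (measure_mono hsub).trans ((measure_union_le _ _).trans ?_)
  have : μ {x | 0 < s0 ∧ k x = s0} = 0 := by
    by_cases h : 0 < s0
    · simpa [h] using hnt s0 h
    · simp [h]
  rw [this, add_zero]
  exact hds0

theorem sig2 (μ : Measure ℝ) (k : ℝ → ℝ≥0∞) (hk : Measurable k) (hfin : μ {x | 0 < k x} ≠ ⊤)
    (hnt : ∀ s, 0 < s → μ {x | k x = s} = 0) (r τ : ℝ≥0∞) :
    min τ (μ {y | r < k y}) ≤ μ {x | r < k x ∧ μ {y | k x < k y} < τ} := by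
  set d : ℝ≥0∞ → ℝ≥0∞ := fun s => μ {y | s < k y} with hd
  have hda : Antitone d := fun s s' h => measure_mono fun y (hy : s' < k y) => h.trans_lt hy
  set T : Set ℝ≥0∞ := {s | 0 < s ∧ d s < τ} with hT
  set s0 := sInf T with hs0
  have hsub : {x | max r s0 < k x} ⊆ {x | r < k x ∧ μ {y | k x < k y} < τ} := by
    intro x hx
    have hx' := max_lt_iff.1 (show max r s0 < k x from hx)
    obtain ⟨s, hs, hss⟩ := sInf_lt_iff.1 hx'.2
    exact ⟨hx'.1, (hda hss.le).trans_lt hs.2⟩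
  refine le_trans ?_ (measure_mono hsub)
  rcases le_total s0 r with h | h
  · rw [max_eq_left h]; exact min_le_right _ _
  rw [max_eq_right h]
  rcases eq_or_ne s0 0 with h0 | h0
  · have : r = 0 := by rw [h0] at h; exact le_antisymm h (zero_le)
    rw [h0, this]; exact min_le_right _ _
  · refine (min_le_left _ _).trans ?_
    have hpos : 0 < s0 := pos_iff_ne_zero.2 h0
    obtain ⟨u, hu, hu2, hu3⟩ := exists_seq_strictMono_tendsto' hpos
    have hge : ∀ n, τ ≤ d (u n) := by
      intro n
      by_contra! hc
      exact absurd (sInf_le (show u n ∈ T from ⟨(hu2 n).1, hc⟩)) (not_le.2 (hu2 n).2)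
    have hI : {x | s0 ≤ k x} = ⋂ n, {x | u n < k x} := by
      ext x
      simp only [mem_ofPred_eq, mem_iInter]
      constructor
      · intro hx n
        exact (hu2 n).2.trans_le hx
      · intro hx
        exact le_of_tendsto' hu3 fun n => (hx n).le
    have hanti : Antitone fun n => {x | u n < k x} := by
      intro m n hmn x hx
      exact lt_of_le_of_lt (hu.monotone hmn) hx
    have h1 : τ ≤ μ {x | s0 ≤ k x} := by
      rw [hI, hanti.measure_iInter (fun n => (measurableSet_lt measurable_const hk).nullMeasurableSet)
        ⟨0, ne_top_of_le_ne_top hfin (measure_mono fun x (hx : u 0 < k x) => (hu2 0).1.trans hx)⟩]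
      exact le_iInf hge
    refine h1.trans ?_
    have : {x | s0 ≤ k x} ⊆ {x | s0 < k x} ∪ {x | k x = s0} := by
      intro x hx
      rcases (show s0 ≤ k x from hx).lt_or_eq with h | h
      · left; exact h
      · right; exact h.symm
    refine (measure_mono this).trans ((measure_union_le _ _).trans ?_)
    rw [hnt s0 hpos, add_zero]

theorem reson (a : ℝ≥0∞) (k : ℝ → ℝ≥0∞) (hk : Measurable k) (hfin : volI a {x | 0 < k x} ≠ ⊤)
    (hnt : ∀ s, 0 < s → volI a {x | k x = s} = 0) (h : ℝ → ℝ≥0∞) (hh : Antitone h)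
    (hht : ∀ t, h t ≠ ⊤) :
    ∃ g : ℝ → ℝ, Measurable g ∧ (∀ t, 0 < t → rearr (volI a) g t ≤ h t) ∧
      ∫⁻ t in Iset a, rearrE (volI a) k t * h t ≤ ∫⁻ x in Iset a, k x * ENNReal.ofReal |g x| := by
  set μ := volI a with hμ
  set d : ℝ≥0∞ → ℝ≥0∞ := fun s => μ {y | s < k y} with hd
  have hda : Antitone d := fun s s' h => measure_mono fun y (hy : s' < k y) => h.trans_lt hy
  have hdt : ∀ s, d s ≠ ⊤ := fun s => ne_top_of_le_ne_top hfin (hda (zero_le))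
  have hdm : Measurable d := hda.measurable
  set gE : ℝ → ℝ≥0∞ := {x | 0 < k x}.indicator (fun x => h (d (k x)).toReal) with hgE
  have hms : MeasurableSet {x | 0 < k x} := measurableSet_lt measurable_const hk
  have hgEm : Measurable gE := by
    refine Measurable.indicator ?_ hms
    exact hh.measurable.comp ((hdm.comp hk).ennreal_toReal)
  have hgEt : ∀ x, gE x ≠ ⊤ := by
    intro x
    by_cases hx : x ∈ {x | 0 < k x}
    · rw [hgE, indicator_of_mem hx]; exact hht _
    · rw [hgE, indicator_of_notMem hx]; simp
  have habs : ∀ x, ENNReal.ofReal |(gE x).toReal| = gE x := by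
    intro x
    rw [abs_of_nonneg ENNReal.toReal_nonneg, ENNReal.ofReal_toReal (hgEt x)]
  refine ⟨fun x => (gE x).toReal, hgEm.ennreal_toReal, ?_, ?_⟩
  · intro t ht
    refine le_of_forall_lt fun s hs => ?_
    rw [rearr, lt_rearrE] at hs
    simp_rw [habs] at hs
    by_contra! hc
    have : μ {x | s < gE x} ≤ ENNReal.ofReal t := by
      refine (measure_mono ?_).trans (sig1 μ k hnt (ENNReal.ofReal t))
      intro x hx
      have hx' : s < gE x := hx
      have h0 : 0 < k x := by
        by_contra h0
        rw [hgE, indicator_of_notMem (show x ∉ {x | 0 < k x} from h0)] at hx'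
        simp at hx'
      refine ⟨h0, ?_⟩
      rw [hgE, indicator_of_mem (show x ∈ {x | 0 < k x} from h0)] at hx'
      by_contra! hc2
      have : t ≤ (d (k x)).toReal := (ENNReal.ofReal_le_iff_le_toReal (hdt _)).1 hc2
      exact absurd (hx'.trans_le ((hh this).trans hc)) (lt_irrefl _)
    exact absurd hs (not_lt.2 this)
  · simp_rw [habs]
    have e1 : ∫⁻ x in Iset a, k x * gE x = ∫⁻ x, k x * gE x ∂μ := rfl
    have e2 : ∫⁻ t in Iset a, rearrE μ k t * h t = ∫⁻ t, rearrE μ k t * h t ∂μ := rfl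
    have hmk := rearrE_measurable μ k
    rw [e1, e2, layer _ _ _ hk hgEm, layer _ _ _ hmk hh.measurable]
    refine lintegral_mono fun s => ?_
    rw [layer1 _ _ hk, layer1 _ _ hmk]
    refine lintegral_mono fun r => ?_
    set s' := ENNReal.ofReal s
    set r' := ENNReal.ofReal r
    rw [Measure.restrict_apply (measurableSet_lt measurable_const hmk),
      Measure.restrict_apply (measurableSet_lt measurable_const hk)]
    set τ := volume {t : ℝ | 0 < t ∧ s' < h t} with hτ
    have h1 : μ ({t | r' < rearrE μ k t} ∩ {t | s' < h t}) ≤ min τ (d r') := by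
      have hmeas : MeasurableSet ({t | r' < rearrE μ k t} ∩ {t | s' < h t}) :=
        (measurableSet_lt measurable_const hmk).inter (measurableSet_lt measurable_const hh.measurable)
      have e3 : μ ({t | r' < rearrE μ k t} ∩ {t | s' < h t})
          = volume (({t | r' < rearrE μ k t} ∩ {t | s' < h t}) ∩ Iset a) :=
        Measure.restrict_apply hmeas
      rw [e3]
      refine le_min (measure_mono ?_) ?_
      · rintro t ⟨⟨_, h2⟩, h3⟩
        exact ⟨h3.1, h2⟩
      · rw [← vol_Iset (d r')]
        refine measure_mono ?_
        rintro t ⟨⟨h1, _⟩, h3⟩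
        exact ⟨h3.1, (lt_rearrE μ k r' t).1 h1⟩
    refine h1.trans ((sig2 μ k hk hfin hnt r' τ).trans (measure_mono ?_))
    rintro x ⟨h2, h3⟩
    refine ⟨h2, ?_⟩
    have h0 : 0 < k x := (zero_le).trans_lt h2
    change s' < gE x
    rw [hgE, indicator_of_mem (show x ∈ {x | 0 < k x} from h0)]
    by_contra! hc
    have : τ ≤ d (k x) := by
      rw [← vol_Iset (d (k x))]
      refine measure_mono ?_
      rintro t ⟨ht, ht2⟩
      refine ⟨ht, ?_⟩
      by_contra! hc2
      have : (d (k x)).toReal ≤ t := by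
        rw [← ENNReal.toReal_ofReal ht.le]
        exact ENNReal.toReal_mono ENNReal.ofReal_ne_top hc2
      exact absurd (ht2.trans_le ((hh this).trans hc)) (lt_irrefl _)
    exact absurd h3 (not_lt.2 this)

theorem exists_noties (a : ℝ≥0∞) (f : ℝ → ℝ) (hf : Measurable f) (δ : ℝ) (hδ : 0 < δ) :
    ∃ ε, 0 < ε ∧ ε < δ ∧ ∀ c : ℝ, 0 < c → volI a {x | |f x| * Real.exp (-ε * x) = c} = 0 := by
  have hc := Measure.countable_meas_pos_of_disjoint_iUnion₀ (μ := volI a)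
    (As := fun i : ℝ × Ioi (0:ℝ) => {x | |f x| * Real.exp (-i.1 * x) = i.2}) ?_ ?_
  · have hc2 := hc.image Prod.fst
    obtain ⟨ε, h1, h2⟩ : ∃ ε ∈ Ioo 0 δ, ε ∉ Prod.fst '' {i : ℝ × Ioi (0:ℝ) | 0 < volI a {x | |f x| * Real.exp (-i.1 * x) = i.2}} := by
      by_contra! hcon
      have : (Ioo 0 δ).Countable := hc2.mono fun ε hε => hcon ε hε
      have h3 := this.measure_zero volume
      simp at h3
      linarith
    refine ⟨ε, h1.1, h1.2, fun c hc => ?_⟩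
    by_contra hcon
    exact h2 ⟨(ε, ⟨c, hc⟩), pos_iff_ne_zero.2 hcon, rfl⟩
  · intro i
    refine (measurableSet_eq_fun ?_ measurable_const).nullMeasurableSet
    fun_prop
  · intro i j hij
    have : ({x | |f x| * Real.exp (-i.1 * x) = i.2} ∩ {x | |f x| * Real.exp (-j.1 * x) = j.2}).Subsingleton := by
      rintro x ⟨hx1, hx2⟩ y ⟨hy1, hy2⟩
      simp only [mem_ofPred_eq] at hx1 hx2 hy1 hy2
      have hi : 0 < (i.2 : ℝ) := i.2.2
      have hj : 0 < (j.2 : ℝ) := j.2.2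
      have aux : ∀ z, |f z| * Real.exp (-i.1 * z) = i.2 → |f z| * Real.exp (-j.1 * z) = j.2 →
          (i.2 : ℝ) = j.2 * Real.exp ((j.1 - i.1) * z) := by
        intro z h1 h2
        rw [← h1, ← h2, mul_assoc, ← Real.exp_add]
        congr 2; ring
      have e1 := aux x hx1 hx2
      have e2 := aux y hy1 hy2
      have e3 : Real.exp ((j.1 - i.1) * x) = Real.exp ((j.1 - i.1) * y) :=
        mul_left_cancel₀ hj.ne' (e1.symm.trans e2)
      have e4 := Real.exp_injective e3
      by_cases hd : j.1 - i.1 = 0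
      · exfalso
        apply hij
        rw [hd] at e1
        simp at e1
        refine Prod.ext (by linarith) (Subtype.ext e1)
      · exact mul_left_cancel₀ hd e4
    have h0 := this.measure_zero volume
    exact le_antisymm ((Measure.restrict_apply_le _ _).trans h0.le) (zero_le)

theorem reson2 (a : ℝ≥0∞) (w : ℝ → ℝ) (p : ℝ) (hp : 1 < p) (f : ℝ → ℝ) (hf : Measurable f)
    (h : ℝ → ℝ≥0∞) (hh : Antitone h) (hht : ∀ t, h t ≠ ⊤)
    (hA : ∫⁻ t in Iset a, h t ^ p * ENNReal.ofReal (w t) ≤ 1) :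
    ∫⁻ t in Iset a, rearr (volI a) f t * h t ≤ lorentzDualNorm a w p f := by
  classical
  set k' : ℕ → ℝ → ℝ≥0∞ := fun n x =>
    (Iset (n+1 : ℕ)).indicator (fun x => ENNReal.ofReal (|f x| * (1 - 1 / ((n:ℝ)+1)))) x with hk'
  have hmono : ∀ x, Monotone fun n => k' n x := by
    intro x m n hmn
    have hmn' : (m:ℝ) ≤ n := by exact_mod_cast hmn
    simp only [hk', indicator_apply]
    split_ifs with h1 h2 h2
    · gcongr
    · exact absurd (Iset_mono (by exact_mod_cast Nat.succ_le_succ hmn) h1) h2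
    · exact zero_le
    · exact le_rfl
  have hmonoR : Monotone fun n => rearrE (volI a) (k' n) := fun m n hmn t =>
    rearrE_mono _ (fun x => hmono x hmn) t
  have hsup : ∀ t, rearr (volI a) f t ≤ ⨆ n, rearrE (volI a) (k' n) t := by
    intro t
    refine le_of_forall_lt fun s hs => ?_
    rw [rearr, lt_rearrE] at hs
    have hU : {x | s < ENNReal.ofReal |f x|} ∩ Iset a ⊆ ⋃ n, {x | s < k' n x} := by
      rintro x ⟨hx, hxa⟩
      have hxs : s < ENNReal.ofReal |f x| := hx
      have hlim : Tendsto (fun n : ℕ => ENNReal.ofReal (|f x| * (1 - 1 / ((n:ℝ)+1)))) atTop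
          (nhds (ENNReal.ofReal |f x|)) := by
        refine ENNReal.tendsto_ofReal ?_
        have := (tendsto_one_div_add_atTop_nhds_zero_nat (𝕜 := ℝ)).const_sub 1 |>.const_mul |f x|
        simpa using this
      have h1 := hlim.eventually_const_lt hxs
      have h2 : ∀ᶠ n : ℕ in atTop, x < n := by
        obtain ⟨N, hN⟩ := exists_nat_gt x
        filter_upwards [eventually_ge_atTop N] with n hn
        exact hN.trans_le (by exact_mod_cast hn)
      obtain ⟨n, hn1, hn2⟩ := (h1.and h2).exists
      refine mem_iUnion.2 ⟨n, ?_⟩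
      have : x ∈ Iset (n+1 : ℕ) := by
        refine ⟨hxa.1, ?_⟩
        rw [ENNReal.ofReal_lt_natCast (by simp)]
        push_cast; linarith
      change s < k' n x
      simp only [hk', indicator_of_mem this]
      exact hn1
    have hU2 : volI a {x | s < ENNReal.ofReal |f x|} ≤ volI a (⋃ n, {x | s < k' n x}) := by
      have hm : MeasurableSet {x | s < ENNReal.ofReal |f x|} :=
        measurableSet_lt measurable_const (by fun_prop)
      have : volI a {x | s < ENNReal.ofReal |f x|} = volI a ({x | s < ENNReal.ofReal |f x|} ∩ Iset a) := by
        rw [volI, Measure.restrict_apply hm, Measure.restrict_apply (hm.inter (measurableSet_Iset a)),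
          inter_assoc, inter_self]
      rw [this]
      exact measure_mono hU
    have hm2 : Monotone fun n => {x | s < k' n x} := by
      intro m n hmn x hx
      exact lt_of_lt_of_le hx (hmono x hmn)
    rw [hm2.measure_iUnion] at hU2
    obtain ⟨n, hn⟩ := lt_iSup_iff.1 (hs.trans_le hU2)
    exact lt_iSup_iff.2 ⟨n, (lt_rearrE _ _ _ _).2 hn⟩
  have hle : ∫⁻ t in Iset a, rearr (volI a) f t * h t
      ≤ ∫⁻ t in Iset a, ⨆ n, rearrE (volI a) (k' n) t * h t := by
    refine lintegral_mono fun t => ?_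
    simp only
    rw [← ENNReal.iSup_mul]
    gcongr
    exact hsup t
  refine hle.trans ?_
  rw [lintegral_iSup (f := fun n t => rearrE (volI a) (k' n) t * h t)
    (fun n => (rearrE_measurable _ _).mul hh.measurable)
    (fun m n hmn t => mul_le_mul_left (hmonoR hmn t) _)]
  refine iSup_le fun n => ?_
  have hn1 : (0:ℝ) < (n:ℝ) + 1 := by positivity
  obtain ⟨ε, hε, hεδ, hnt⟩ := exists_noties a f hf (1 / ((n:ℝ)+1)^2) (by positivity)
  set k : ℝ → ℝ≥0∞ := (Iset (n+1 : ℕ)).indicator (fun x => ENNReal.ofReal (|f x| * Real.exp (-ε * x))) with hk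
  have hkm : Measurable k := Measurable.indicator (by fun_prop) (measurableSet_Iset _)
  have hkk : ∀ x, k' n x ≤ k x := by
    intro x
    simp only [hk', hk, indicator_apply]
    split_ifs with h1
    · gcongr
      have hx : x < n + 1 := by
        have := h1.2
        rw [ENNReal.ofReal_lt_natCast (by simp)] at this
        push_cast at this; exact this
      have h2 : ε * x ≤ 1 / ((n:ℝ)+1) := by
        calc ε * x ≤ (1 / ((n:ℝ)+1)^2) * (n+1) := by
              have := h1.1
              gcongr
          _ = 1 / ((n:ℝ)+1) := by field_simp
      have := Real.add_one_le_exp (-ε * x)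
      linarith
    · exact le_rfl
  have hkf : ∀ x, k x ≤ ENNReal.ofReal |f x| := by
    intro x
    simp only [hk, indicator_apply]
    split_ifs with h1
    · refine ENNReal.ofReal_le_ofReal ?_
      have : Real.exp (-ε * x) ≤ 1 := Real.exp_le_one_iff.2 (by have := h1.1; nlinarith)
      exact mul_le_of_le_one_right (abs_nonneg _) this
    · exact zero_le
  have hfk : volI a {x | 0 < k x} ≠ ⊤ := by
    refine ne_top_of_le_ne_top (b := ((n+1 : ℕ) : ℝ≥0∞)) (by simp) ?_
    rw [← vol_Iset ((n+1 : ℕ) : ℝ≥0∞)]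
    refine (Measure.restrict_apply_le _ _).trans (measure_mono fun x hx => ?_)
    by_contra hx2
    have hx' : 0 < k x := hx
    rw [hk, indicator_of_notMem hx2] at hx'
    exact lt_irrefl _ hx'
  have hntk : ∀ s, 0 < s → volI a {x | k x = s} = 0 := by
    intro s hs
    rcases eq_or_ne s ⊤ with rfl | hst
    · have : {x | k x = ⊤} = ∅ := by
        ext x
        simp only [mem_ofPred_eq, mem_empty_iff_false, iff_false]
        exact ne_top_of_le_ne_top ENNReal.ofReal_ne_top (hkf x)
      rw [this]; simp
    · refine measure_mono_null ?_ (hnt s.toReal (ENNReal.toReal_pos hs.ne' hst))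
      intro x hx
      have hx' : k x = s := hx
      have hxm : x ∈ Iset (n+1 : ℕ) := by
        by_contra hx2
        rw [hk, indicator_of_notMem hx2] at hx'
        exact hs.ne hx'
      rw [hk, indicator_of_mem hxm] at hx'
      change |f x| * Real.exp (-ε * x) = s.toReal
      rw [← hx', ENNReal.toReal_ofReal (by positivity)]
  obtain ⟨g, hg, hg1, hg2⟩ := reson a k hkm hfk hntk h hh hht
  calc ∫⁻ t in Iset a, rearrE (volI a) (k' n) t * h t
        ≤ ∫⁻ t in Iset a, rearrE (volI a) k t * h t := by
          refine lintegral_mono fun t => ?_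
          have := rearrE_mono (volI a) hkk t
          simp only
          gcongr
      _ ≤ ∫⁻ x in Iset a, k x * ENNReal.ofReal |g x| := hg2
      _ ≤ ∫⁻ x in Iset a, ENNReal.ofReal |f x * g x| := by
          refine lintegral_mono fun x => ?_
          simp only
          rw [abs_mul, ENNReal.ofReal_mul (abs_nonneg _)]
          have := hkf x
          gcongr
      _ ≤ _ := by
          refine le_sSup ⟨g, hg, ?_, rfl⟩
          refine le_trans (setLIntegral_mono' (measurableSet_Iset a) fun t ht => ?_) hA
          have := hg1 t ht.1
          gcongr

theorem lint_pow_Ioo (c v : ℝ) (hc : 0 < c) (hv : 0 ≤ v) :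
    ∫⁻ x in Ioo 0 v, ENNReal.ofReal (c * x ^ (c - 1)) = ENNReal.ofReal v ^ c := by
  have hint : IntervalIntegrable (fun x : ℝ => c * x ^ (c - 1)) volume 0 v :=
    (intervalIntegral.intervalIntegrable_rpow' (by linarith)).const_mul c
  rw [restrict_Ioo_eq_restrict_Ioc, ← ofReal_integral_eq_lintegral_ofReal]
  · rw [← intervalIntegral.integral_of_le hv, intervalIntegral.integral_const_mul,
      integral_rpow (Or.inl (by linarith))]
    rw [ENNReal.ofReal_rpow_of_nonneg hv hc.le]
    congr 1
    rw [sub_add_cancel, Real.zero_rpow hc.ne']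
    field_simp
    simp
  · exact (intervalIntegrable_iff_integrableOn_Ioc_of_le hv).1 hint
  · filter_upwards [ae_restrict_mem measurableSet_Ioc] with x hx
    have := hx.1
    simp only [Pi.zero_apply]
    positivity

theorem lint_pow (c : ℝ) (hc : 0 < c) (S : Set ℝ) (hS : S ⊆ Ioi 0)
    (hd : ∀ x ∈ S, ∀ y, 0 < y → y < x → y ∈ S) :
    ∫⁻ x in S, ENNReal.ofReal (c * x ^ (c - 1)) = (volume S) ^ c := by
  by_cases hv : volume S = ⊤
  · rw [hv, ENNReal.top_rpow_of_pos hc]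
    have hsub : ∀ n : ℕ, Ioo (0:ℝ) n ⊆ S := by
      intro n y hy
      by_contra hcon
      have : S ⊆ Ioc 0 y := by
        intro x hx
        refine ⟨hS hx, ?_⟩
        by_contra! hxy
        exact hcon (hd x hx y hy.1 hxy)
      have h2 := measure_mono (μ := volume) this
      rw [hv] at h2
      simp at h2
    have hle : ∀ n : ℕ, (n : ℝ≥0∞) ^ c ≤ ∫⁻ x in S, ENNReal.ofReal (c * x ^ (c - 1)) := by
      intro n
      have := lint_pow_Ioo c n hc (Nat.cast_nonneg n)
      rw [ENNReal.ofReal_natCast] at this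
      rw [← this]
      exact lintegral_mono_set (hsub n)
    refine ENNReal.eq_top_of_forall_nnreal_le fun r => ?_
    obtain ⟨n, hn⟩ := exists_nat_gt ((r : ℝ≥0∞) ^ (1/c)).toReal
    have hfin : (r : ℝ≥0∞) ^ (1/c) ≠ ⊤ := ENNReal.rpow_ne_top_of_nonneg (by positivity) (by simp)
    have h1 : (r : ℝ≥0∞) ^ (1/c) ≤ n := by
      rw [← ENNReal.ofReal_toReal hfin, ← ENNReal.ofReal_natCast]
      exact ENNReal.ofReal_le_ofReal hn.le
    refine le_trans ?_ (hle n)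
    rw [one_div] at h1
    exact (ENNReal.rpow_inv_le_iff hc).1 h1
  · set v := (volume S).toReal with hvd
    have hvS : volume S = ENNReal.ofReal v := (ENNReal.ofReal_toReal hv).symm
    have h0 : 0 ≤ v := ENNReal.toReal_nonneg
    have h1 : S ⊆ Ioc 0 v := by
      intro x hx
      have hx0 : 0 < x := hS hx
      refine ⟨hx0, ?_⟩
      have : Ioo 0 x ⊆ S := fun y hy => hd x hx y hy.1 hy.2
      have h2 := measure_mono (μ := volume) this
      rw [hvS] at h2
      simp only [Real.volume_Ioo, sub_zero] at h2
      exact (ENNReal.ofReal_le_ofReal_iff h0).1 h2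
    have h2 : Ioo 0 v ⊆ S := by
      intro y hy
      by_contra hcon
      have : S ⊆ Ioc 0 y := by
        intro x hx
        refine ⟨hS hx, ?_⟩
        by_contra! hxy
        exact hcon (hd x hx y hy.1 hxy)
      have h2 := measure_mono (μ := volume) this
      rw [hvS] at h2
      simp only [Real.volume_Ioc, sub_zero] at h2
      have := (ENNReal.ofReal_le_ofReal_iff hy.1.le).1 h2
      linarith [hy.2]
    rw [hvS, ← lint_pow_Ioo c v hc h0]
    refine le_antisymm ?_ (lintegral_mono_set h2)
    rw [restrict_Ioo_eq_restrict_Ioc]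
    exact lintegral_mono_set h1

theorem const_of_small (D U : ℝ → ℝ) (l l' : ℝ) (hl : l ≤ l')
    (h : ∀ s t, l ≤ s → s ≤ t → t ≤ l' → |D t - D s| ≤ (t - s) * (U s - U t)) : D l' = D l := by
  have key : ∀ n : ℕ, |D l' - D l| ≤ (l' - l) * (U l - U l') * (1 / ((n:ℝ) + 1)) := by
    intro n
    have hn : (0:ℝ) < (n:ℝ) + 1 := by positivity
    set x : ℕ → ℝ := fun i => l + (l' - l) * (i / ((n:ℝ)+1)) with hx
    have hx0 : x 0 = l := by simp [hx]
    have hxn : x (n+1) = l' := by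
      simp only [hx]; push_cast; rw [div_self hn.ne']; ring
    have hmono : Monotone x := by
      intro i j hij
      have : (i:ℝ) ≤ j := by exact_mod_cast hij
      have : 0 ≤ l' - l := by linarith
      simp only [hx]; gcongr
    have hstep : ∀ i, x (i+1) - x i = (l' - l) * (1 / ((n:ℝ)+1)) := by
      intro i; simp only [hx]; push_cast; ring
    calc |D l' - D l| = |∑ i ∈ Finset.range (n+1), (D (x (i+1)) - D (x i))| := by
          rw [Finset.sum_range_sub (fun i => D (x i)), hx0, hxn]
      _ ≤ ∑ i ∈ Finset.range (n+1), |D (x (i+1)) - D (x i)| := Finset.abs_sum_le_sum_abs _ _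
      _ ≤ ∑ i ∈ Finset.range (n+1), (l' - l) * (1 / ((n:ℝ)+1)) * (U (x i) - U (x (i+1))) := by
          refine Finset.sum_le_sum fun i hi => ?_
          rw [← hstep i]
          refine h _ _ ?_ (hmono (Nat.le_succ i)) ?_
          · rw [← hx0]; exact hmono (Nat.zero_le i)
          · rw [← hxn]; exact hmono (by have := Finset.mem_range.1 hi; omega)
      _ = _ := by
          rw [← Finset.mul_sum, Finset.sum_range_sub' (fun i => U (x i)), hx0, hxn]
          ring
  have hlim : Tendsto (fun n : ℕ => (l' - l) * (U l - U l') * (1 / ((n:ℝ) + 1))) atTop (nhds 0) := by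
    have := (tendsto_one_div_add_atTop_nhds_zero_nat (𝕜 := ℝ)).const_mul ((l' - l) * (U l - U l'))
    simpa using this
  have h0 : |D l' - D l| ≤ 0 := ge_of_tendsto' hlim key
  have := abs_nonpos_iff.1 h0
  linarith

theorem envelope (Φ U : ℝ → ℝ) (hU : ∀ l, 0 < l → 0 ≤ U l)
    (h1 : ∀ l l', 0 < l → l ≤ l' → (l' - l) * U l' ≤ Φ l - Φ l')
    (h2 : ∀ l l', 0 < l → l ≤ l' → Φ l - Φ l' ≤ (l' - l) * U l)
    (hlim : Tendsto Φ atTop (nhds 0)) (l : ℝ) (hl : 0 < l) :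
    ∫⁻ s in Ioi l, ENNReal.ofReal (U s) = ENNReal.ofReal (Φ l) := by
  have hanti : AntitoneOn U (Ioi 0) := by
    intro s hs t ht hst
    rcases hst.eq_or_lt with rfl | h
    · exact le_rfl
    have := (h1 s t hs hst).trans (h2 s t hs hst)
    exact le_of_mul_le_mul_left this (by linarith)
  have hii : ∀ s t, 0 < s → s ≤ t → IntervalIntegrable U volume s t := by
    intro s t hs hst
    refine AntitoneOn.intervalIntegrable (hanti.mono ?_)
    rw [uIcc_of_le hst]
    exact fun x hx => lt_of_lt_of_le hs hx.1
  have hfin : ∀ l', l ≤ l' → ∫⁻ s in Ioc l l', ENNReal.ofReal (U s) = ENNReal.ofReal (Φ l - Φ l') := by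
    intro l' hll
    have hc := const_of_small (fun t => (∫ s in l..t, U s) + Φ t) U l l' hll ?_
    · rw [← ofReal_integral_eq_lintegral_ofReal]
      · rw [← intervalIntegral.integral_of_le hll]
        congr 1
        simp at hc
        linarith
      · exact (intervalIntegrable_iff_integrableOn_Ioc_of_le hll).1 (hii l l' hl hll)
      · filter_upwards [ae_restrict_mem measurableSet_Ioc] with x hx
        exact hU x (hl.trans hx.1)
    · intro s t hs hst ht
      have hs0 : 0 < s := hl.trans_le hs
      have e : (∫ s in l..t, U s) = (∫ s in l..s, U s) + ∫ s in s..t, U s :=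
        (intervalIntegral.integral_add_adjacent_intervals (hii l s hl hs) (hii s t hs0 hst)).symm
      have b1 : (t - s) * U t ≤ ∫ s in s..t, U s := by
        have := intervalIntegral.integral_mono_on hst (μ := volume) (f := fun _ => U t) (g := U)
          (by simp) (hii s t hs0 hst)
          (fun x hx => hanti (lt_of_lt_of_le hs0 hx.1) (lt_of_lt_of_le hs0 hst) hx.2)
        simpa using this
      have b2 : ∫ s in s..t, U s ≤ (t - s) * U s := by
        have := intervalIntegral.integral_mono_on hst (μ := volume) (g := fun _ => U s) (f := U)
          (hii s t hs0 hst) (by simp)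
          (fun x hx => hanti hs0 (lt_of_lt_of_le hs0 hx.1) hx.1)
        simpa using this
      have c1 := h1 s t hs0 hst
      have c2 := h2 s t hs0 hst
      rw [abs_le]
      rw [e]
      constructor <;> nlinarith
  have hUn : Ioi l = ⋃ n : ℕ, Ioc l (l + n) := by
    ext x
    simp only [mem_Ioi, mem_iUnion, mem_Ioc]
    constructor
    · intro hx
      obtain ⟨n, hn⟩ := exists_nat_gt (x - l)
      exact ⟨n, hx, by linarith⟩
    · rintro ⟨n, h, _⟩; exact h
  have hmono : Monotone fun n : ℕ => Ioc l (l + n) := by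
    intro m n hmn
    have : (m:ℝ) ≤ n := by exact_mod_cast hmn
    exact Ioc_subset_Ioc_right (by linarith)
  rw [hUn, setLIntegral_iUnion_of_directed _ hmono.directed_le]
  have hmono2 : Monotone fun n : ℕ => ∫⁻ s in Ioc l (l + n), ENNReal.ofReal (U s) :=
    fun m n hmn => lintegral_mono_set (hmono hmn)
  refine tendsto_nhds_unique (tendsto_atTop_iSup hmono2) ?_
  have : (fun n : ℕ => ∫⁻ s in Ioc l (l + n), ENNReal.ofReal (U s))
      = fun n : ℕ => ENNReal.ofReal (Φ l - Φ (l + n)) := by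
    funext n
    exact hfin _ (by simp)
  rw [this]
  refine ENNReal.tendsto_ofReal ?_
  have h3 : Tendsto (fun n : ℕ => l + (n:ℝ)) atTop atTop :=
    tendsto_atTop_add_const_left _ _ tendsto_natCast_atTop_atTop
  simpa using (hlim.comp h3).const_sub (Φ l)

theorem cont_prim (u : ℝ → ℝ≥0∞) (hu : Measurable u) (X : ℝ≥0∞) (hX : ∫⁻ t in Iset X, u t ≠ ⊤) :
    ContinuousOn (fun x => ∫⁻ t in Iset x, u t) (Iic X) := by
  intro x hx
  have e : ∀ y ∈ Iic X, ∫⁻ t in Iset y, u t = ∫⁻ t in Iset X, (Iset y).indicator u t := by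
    intro y hy
    rw [lintegral_indicator (measurableSet_Iset y), Measure.restrict_restrict (measurableSet_Iset y),
      inter_eq_self_of_subset_left (Iset_mono hy)]
  have hmain : Tendsto (fun y => ∫⁻ t in Iset X, (Iset y).indicator u t) (nhdsWithin x (Iic X))
      (nhds (∫⁻ t in Iset X, (Iset x).indicator u t)) := by
    refine tendsto_lintegral_filter_of_dominated_convergence u ?_ ?_ hX ?_
    · exact Eventually.of_forall fun y => hu.indicator (measurableSet_Iset y)
    · exact Eventually.of_forall fun y => Eventually.of_forall fun t => indicator_le_self _ _ _
    · have hae : ∀ᵐ t ∂(volume.restrict (Iset X)), t ≠ x.toReal :=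
        ae_restrict_of_ae (Measure.ae_ne volume x.toReal)
      filter_upwards [hae, ae_restrict_mem (measurableSet_Iset X)] with t ht htX
      have hne : ENNReal.ofReal t ≠ x := by
        intro h
        apply ht
        rw [← h, ENNReal.toReal_ofReal htX.1.le]
      refine tendsto_const_nhds.congr' ?_
      rcases hne.lt_or_gt with h | h
      · have : ∀ᶠ y in nhdsWithin x (Iic X), ENNReal.ofReal t < y :=
          nhdsWithin_le_nhds (lt_mem_nhds h)
        filter_upwards [this] with y hy
        rw [indicator_of_mem (show t ∈ Iset x from ⟨htX.1, h⟩),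
          indicator_of_mem (show t ∈ Iset y from ⟨htX.1, hy⟩)]
      · have : ∀ᶠ y in nhdsWithin x (Iic X), y < ENNReal.ofReal t :=
          nhdsWithin_le_nhds (gt_mem_nhds h)
        filter_upwards [this] with y hy
        rw [indicator_of_notMem (show t ∉ Iset x from fun hh => lt_asymm h hh.2),
          indicator_of_notMem (show t ∉ Iset y from fun hh => lt_asymm hy hh.2)]
  have := hmain.congr' (f₂ := fun x => ∫⁻ t in Iset x, u t) ?_
  · rw [← e x hx] at this
    exact this
  · filter_upwards [self_mem_nhdsWithin] with y hy
    exact (e y hy).symm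

theorem holder_w (E : Set ℝ) (hE : MeasurableSet E) (w : ℝ → ℝ) (hw : Measurable w)
    (hpos : ∀ x ∈ E, 0 < w x) (p q : ℝ) (hp : 1 < p) (hpq : 1/p + 1/q = 1)
    (u v : ℝ → ℝ≥0∞) (hu : Measurable u) (hv : Measurable v) :
    ∫⁻ t in E, u t * v t ≤ (∫⁻ t in E, u t ^ q * ENNReal.ofReal (w t) ^ (1 - q)) ^ (1/q)
      * (∫⁻ t in E, v t ^ p * ENNReal.ofReal (w t)) ^ (1/p) := by
  have hp0 : 0 < p := by linarith
  have hqp : q = p / (p - 1) := by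
    have hp1 : p - 1 ≠ 0 := by linarith
    have : 1/q = 1 - 1/p := by linarith
    have h2 : 1 - 1/p = (p-1)/p := by field_simp
    rw [h2] at this
    have h3 := congrArg (fun z => z⁻¹) this
    simpa using h3
  have hq0 : 0 < q := by rw [hqp]; apply div_pos <;> linarith
  have hconj : q.HolderConjugate p := by
    rw [Real.holderConjugate_iff]
    refine ⟨?_, ?_⟩
    · rw [hqp, lt_div_iff₀ (by linarith)]; linarith
    · rw [← one_div, ← one_div]; linarith
  have hW : Measurable fun t => ENNReal.ofReal (w t) := hw.ennreal_ofReal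
  have h := ENNReal.lintegral_mul_le_Lp_mul_Lq (volume.restrict E) hconj
    (f := fun t => u t * ENNReal.ofReal (w t) ^ (-(1/p))) (g := fun t => v t * ENNReal.ofReal (w t) ^ (1/p))
    (hu.mul (hW.pow_const _)).aemeasurable (hv.mul (hW.pow_const _)).aemeasurable
  have e0 : ∫⁻ t in E, u t * v t = ∫⁻ t in E, ((fun t => u t * ENNReal.ofReal (w t) ^ (-(1/p))) * fun t => v t * ENNReal.ofReal (w t) ^ (1/p)) t := by
    refine setLIntegral_congr_fun hE fun t ht => ?_
    have h0 : ENNReal.ofReal (w t) ≠ 0 := by simpa using hpos t ht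
    simp only [Pi.mul_apply]
    have : ENNReal.ofReal (w t) ^ (-(1/p)) * ENNReal.ofReal (w t) ^ (1/p) = 1 := by
      rw [← ENNReal.rpow_add _ _ h0 ENNReal.ofReal_ne_top]; simp
    calc u t * v t = u t * v t * (ENNReal.ofReal (w t) ^ (-(1/p)) * ENNReal.ofReal (w t) ^ (1/p)) := by rw [this, mul_one]
      _ = _ := by ring
  rw [e0]
  refine h.trans (le_of_eq ?_)
  congr 2
  · refine lintegral_congr fun t => ?_
    rw [ENNReal.mul_rpow_of_nonneg _ _ hq0.le, ← ENNReal.rpow_mul]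
    congr 2
    have : q * (1/p) = q - 1 := by
      have h3 : 1/p = 1 - 1/q := by linarith
      rw [h3]; field_simp
    linarith
  · refine lintegral_congr fun t => ?_
    rw [ENNReal.mul_rpow_of_nonneg _ _ hp0.le, ← ENNReal.rpow_mul]
    congr 2
    rw [one_div, inv_mul_cancel₀ hp0.ne', ENNReal.rpow_one]

theorem young_aux (p q n l ω : ℝ) (hp : 1 < p) (hq : 1 < q) (hpq : 1/p + 1/q = 1) (hn : 0 ≤ n) (hl : 0 < l)
    (hω : 0 ≤ ω) : (n * ω ^ (1/p) ≤ l * ω ∨ ω < (n / l) ^ q) := by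
  by_cases h : ω < (n / l) ^ q
  · right; exact h
  left
  push Not at h
  rcases hω.eq_or_lt with rfl | h0
  · rw [Real.zero_rpow (by positivity)]; simp
  have e : ω = ω ^ (1/p) * ω ^ (1/q) := by
    rw [← Real.rpow_add h0, hpq, Real.rpow_one]
  have h1 : n / l ≤ ω ^ (1/q) := by
    have := Real.rpow_le_rpow (by positivity) h (show (0:ℝ) ≤ 1/q by positivity)
    rwa [← Real.rpow_mul (by positivity), mul_one_div_cancel (by positivity), Real.rpow_one] at this
  have h2 : n ≤ l * ω ^ (1/q) := by
    rw [div_le_iff₀ hl] at h1; linarith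
  calc n * ω ^ (1/p) ≤ (l * ω ^ (1/q)) * ω ^ (1/p) := by gcongr
    _ = l * ω := by conv_rhs => rw [e]
                    ring

theorem maxim (a : ℝ≥0∞) (F W : ℝ≥0∞ → ℝ≥0∞) (p q n : ℝ) (hp : 1 < p) (hq : 1 < q)
    (hpq : 1/p + 1/q = 1) (hn : 0 ≤ n) (hF0 : F 0 = 0) (hW0 : W 0 = 0) (hWm : Monotone W)
    (hWf : ∀ x, x < a → W x ≠ ⊤) (hsup : ∀ K, K < W a → ∃ x, x ≤ a ∧ K ≤ W x ∧ (W x ≠ ⊤ ∨ W a ≠ ⊤))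
    (hFb : ∀ x, x ≤ a → W x ≠ ⊤ → F x ≠ ⊤ ∧ (F x).toReal ≤ n * (W x).toReal ^ (1/p))
    (hFc : ∀ X, X ≤ a → W X ≠ ⊤ → ContinuousOn F (Iic X))
    (hWc : ∀ X, X ≤ a → W X ≠ ⊤ → ContinuousOn W (Iic X)) (l : ℝ) (hl : 0 < l) :
    ∃ x, x ≤ a ∧ W x ≠ ⊤ ∧ ∀ y, y ≤ a → W y ≠ ⊤ →
      (F y).toReal - l * (W y).toReal ≤ (F x).toReal - l * (W x).toReal := by
  obtain ⟨X, hXa, hXf, hX⟩ : ∃ X, X ≤ a ∧ W X ≠ ⊤ ∧ ∀ y, y ≤ a → X < y → W y ≠ ⊤ →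
      (F y).toReal ≤ l * (W y).toReal := by
    by_cases hWa : W a = ⊤
    · obtain ⟨X, h1, h2, h3⟩ := hsup (ENNReal.ofReal ((n / l) ^ q)) (by rw [hWa]; simp)
      have h3' : W X ≠ ⊤ := h3.resolve_right (by simp [hWa])
      refine ⟨X, h1, h3', fun y hy hXy hyf => ?_⟩
      refine (hFb y hy hyf).2.trans ?_
      rcases young_aux p q n l (W y).toReal hp hq hpq hn hl ENNReal.toReal_nonneg with h | h
      · exact h
      · exfalso
        have h4 := h2.trans (hWm hXy.le)
        rw [ENNReal.ofReal_le_iff_le_toReal hyf] at h4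
        linarith
    · exact ⟨a, le_rfl, hWa, fun y hy hay => absurd hy (not_le.2 hay)⟩
  have hWX : ∀ y ∈ Icc 0 X, W y ≠ ⊤ := fun y hy => ne_top_of_le_ne_top hXf (hWm hy.2)
  have hc : ContinuousOn (fun x => (F x).toReal - l * (W x).toReal) (Icc 0 X) := by
    have c1 : ContinuousOn (fun x => (F x).toReal) (Icc 0 X) :=
      ENNReal.continuousOn_toReal.comp ((hFc X hXa hXf).mono fun y hy => hy.2)
        fun y hy => (hFb y (hy.2.trans hXa) (hWX y hy)).1
    have c2 : ContinuousOn (fun x => (W x).toReal) (Icc 0 X) :=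
      ENNReal.continuousOn_toReal.comp ((hWc X hXa hXf).mono fun y hy => hy.2)
        fun y hy => hWX y hy
    exact c1.sub (continuousOn_const.mul c2)
  obtain ⟨x, hx, hmax⟩ := isCompact_Icc.exists_isMaxOn ⟨0, by simp⟩ hc
  refine ⟨x, hx.2.trans hXa, hWX x hx, fun y hy hyf => ?_⟩
  rcases le_or_gt y X with h | h
  · exact hmax ⟨zero_le, h⟩
  · have h1 := hX y hy h hyf
    have h2 := hmax (show (0 : ℝ≥0∞) ∈ Icc 0 X by simp)
    simp only [hF0, hW0, mem_ofPred_eq] at h2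
    simp at h2
    linarith

theorem level (a : ℝ≥0∞) (F W : ℝ≥0∞ → ℝ≥0∞) (p q n : ℝ) (hp : 1 < p) (hq : 1 < q)
    (hpq : 1/p + 1/q = 1) (hn : 0 ≤ n) (hF0 : F 0 = 0) (hW0 : W 0 = 0) (hWm : Monotone W)
    (hWf : ∀ x, x < a → W x ≠ ⊤) (hsup : ∀ K, K < W a → ∃ x, x ≤ a ∧ K ≤ W x ∧ (W x ≠ ⊤ ∨ W a ≠ ⊤))
    (hWs : ∀ x y, x < y → y ≤ a → W x ≠ ⊤ → W x < W y)
    (hFb : ∀ x, x ≤ a → W x ≠ ⊤ → F x ≠ ⊤ ∧ (F x).toReal ≤ n * (W x).toReal ^ (1/p))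
    (hFc : ∀ X, X ≤ a → W X ≠ ⊤ → ContinuousOn F (Iic X))
    (hWc : ∀ X, X ≤ a → W X ≠ ⊤ → ContinuousOn W (Iic X)) :
    ∃ x : ℝ → ℝ≥0∞, Antitone x ∧ (∀ l, x l ≤ a) ∧ (∀ l, 0 < l → W (x l) ≠ ⊤) ∧
      (∀ l, 0 < l → F (x l) = ENNReal.ofReal l * W (x l) + ∫⁻ s in Ioi l, W (x s)) ∧
      (∀ l, 0 < l → ∀ y, y ≤ a → W y ≠ ⊤ → F y ≤ ENNReal.ofReal l * W y + ∫⁻ s in Ioi l, W (x s)) ∧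
      (∀ y, 0 < y → y ≤ a → ∃ L, 0 < L ∧ ∀ l, L ≤ l → x l ≤ y) := by
  have hm := maxim a F W p q n hp hq hpq hn hF0 hW0 hWm hWf hsup hFb hFc hWc
  choose! z hz1 hz2 hz3 using hm
  set x : ℝ → ℝ≥0∞ := fun l => if 0 < l then z l else a with hx
  have hxz : ∀ l, 0 < l → x l = z l := fun l hl => by simp [hx, hl]
  have hx1 : ∀ l, x l ≤ a := by
    intro l
    by_cases hl : 0 < l
    · rw [hxz l hl]; exact hz1 l hl
    · simp [hx, hl]
  have hx2 : ∀ l, 0 < l → W (x l) ≠ ⊤ := fun l hl => by rw [hxz l hl]; exact hz2 l hl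
  have hx3 : ∀ l, 0 < l → ∀ y, y ≤ a → W y ≠ ⊤ →
      (F y).toReal - l * (W y).toReal ≤ (F (x l)).toReal - l * (W (x l)).toReal := fun l hl => by
    rw [hxz l hl]; exact hz3 l hl
  set U : ℝ → ℝ := fun l => (W (x l)).toReal with hU
  set Φ : ℝ → ℝ := fun l => (F (x l)).toReal - l * (W (x l)).toReal with hΦ
  have hU0 : ∀ l, 0 ≤ U l := fun l => ENNReal.toReal_nonneg
  have h1 : ∀ l l', 0 < l → l ≤ l' → (l' - l) * U l' ≤ Φ l - Φ l' := by
    intro l l' hl hll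
    have := hx3 l hl (x l') (hx1 l') (hx2 l' (hl.trans_le hll))
    simp only [hU, hΦ]; linarith
  have h2 : ∀ l l', 0 < l → l ≤ l' → Φ l - Φ l' ≤ (l' - l) * U l := by
    intro l l' hl hll
    have := hx3 l' (hl.trans_le hll) (x l) (hx1 l) (hx2 l hl)
    simp only [hU, hΦ]; linarith
  have hUanti : ∀ l l', 0 < l → l < l' → U l' ≤ U l := by
    intro l l' hl hll
    have := (h1 l l' hl hll.le).trans (h2 l l' hl hll.le)
    exact le_of_mul_le_mul_left this (by linarith)
  have hΦ0 : ∀ l, 0 < l → 0 ≤ Φ l := by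
    intro l hl
    have := hx3 l hl 0 zero_le (by simp [hW0])
    simpa [hF0, hW0, hΦ] using this
  have hFle : ∀ l, 0 < l → (F (x l)).toReal ≤ n * U l ^ (1/p) := fun l hl => (hFb _ (hx1 l) (hx2 l hl)).2
  have hUb : ∀ l, 0 < l → U l ≤ (n / l) ^ q := by
    intro l hl
    -- use l/2 to get strictness
    by_contra! hc
    have hpos : 0 < U l := lt_of_le_of_lt (by positivity) hc
    have hlU : l * U l ≤ n * U l ^ (1/p) := by
      have := hΦ0 l hl; have := hFle l hl; simp only [hΦ, hU] at *; linarith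
    have e : U l = U l ^ (1/p) * U l ^ (1/q) := by
      rw [← Real.rpow_add hpos, hpq, Real.rpow_one]
    have h3 : l * U l ^ (1/q) ≤ n := by
      have hp' : 0 < U l ^ (1/p) := by positivity
      rw [e] at hlU
      refine le_of_mul_le_mul_right ?_ hp'
      rw [← e] at hlU
      calc l * U l ^ (1/q) * U l ^ (1/p) = l * (U l ^ (1/p) * U l ^ (1/q)) := by ring
        _ = l * U l := by rw [← e]
        _ ≤ _ := hlU
    have h4 : U l ^ (1/q) ≤ n / l := by rw [le_div_iff₀ hl]; linarith
    have h5 := Real.rpow_le_rpow (by positivity) h4 (show (0:ℝ) ≤ q by linarith)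
    rw [← Real.rpow_mul hpos.le, one_div_mul_cancel (by positivity), Real.rpow_one] at h5
    linarith
  have hlim0 : Tendsto (fun l : ℝ => (n / l) ^ q) atTop (nhds 0) := by
    have h3 : Tendsto (fun l : ℝ => n / l) atTop (nhds 0) := tendsto_const_nhds.div_atTop tendsto_id
    have := h3.rpow_const (p := q) (Or.inr (by linarith))
    rwa [Real.zero_rpow (by linarith)] at this
  have hUlim : Tendsto U atTop (nhds 0) := by
    refine tendsto_of_tendsto_of_tendsto_of_le_of_le' tendsto_const_nhds hlim0
      (Eventually.of_forall hU0) ?_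
    filter_upwards [eventually_gt_atTop 0] with l hl using hUb l hl
  have hΦlim : Tendsto Φ atTop (nhds 0) := by
    have h3 : Tendsto (fun l => n * U l ^ (1/p)) atTop (nhds 0) := by
      have := (hUlim.rpow_const (p := 1/p) (Or.inr (by positivity))).const_mul n
      rwa [Real.zero_rpow (by positivity), mul_zero] at this
    refine tendsto_of_tendsto_of_tendsto_of_le_of_le' tendsto_const_nhds h3 ?_ ?_
    · filter_upwards [eventually_gt_atTop 0] with l hl using hΦ0 l hl
    · filter_upwards [eventually_gt_atTop 0] with l hl
      refine le_trans ?_ (hFle l hl)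
      have := hU0 l
      simp only [hΦ]
      have : 0 ≤ l * (W (x l)).toReal := by positivity
      linarith
  have hUW : ∀ l, 0 < l → ENNReal.ofReal (U l) = W (x l) := fun l hl => ENNReal.ofReal_toReal (hx2 l hl)
  have henv : ∀ l, 0 < l → ∫⁻ s in Ioi l, W (x s) = ENNReal.ofReal (Φ l) := by
    intro l hl
    rw [← envelope Φ U (fun l _ => hU0 l) h1 h2 hΦlim l hl]
    refine setLIntegral_congr_fun measurableSet_Ioi fun s hs => ?_
    exact (hUW s (hl.trans hs)).symm
  refine ⟨x, ?_, hx1, hx2, ?_, ?_, ?_⟩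
  · intro l l' hll
    by_cases hl : 0 < l
    · rcases hll.eq_or_lt with rfl | h
      · exact le_rfl
      by_contra! hc
      have h3 := hWs _ _ hc (hx1 l') (hx2 l hl)
      have h4 := hUanti l l' hl h
      have h5 := (ENNReal.toReal_le_toReal (hx2 l' (hl.trans h)) (hx2 l hl)).1 h4
      exact absurd h3 (not_lt.2 h5)
    · have : x l = a := by simp [hx, hl]
      rw [this]; exact hx1 l'
  · intro l hl
    rw [henv l hl, ← hUW l hl, ← ENNReal.ofReal_mul hl.le,
      ← ENNReal.ofReal_add (mul_nonneg hl.le (hU0 l)) (hΦ0 l hl)]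
    rw [← ENNReal.ofReal_toReal (hFb _ (hx1 l) (hx2 l hl)).1]
    congr 1
    simp only [hU, hΦ]; ring
  · intro l hl y hy hyf
    rw [henv l hl, ← ENNReal.ofReal_toReal hyf, ← ENNReal.ofReal_mul hl.le,
      ← ENNReal.ofReal_add (mul_nonneg hl.le ENNReal.toReal_nonneg) (hΦ0 l hl)]
    rw [← ENNReal.ofReal_toReal (hFb y hy hyf).1]
    refine ENNReal.ofReal_le_ofReal ?_
    have := hx3 l hl y hy hyf
    simp only [hΦ]; linarith
  · intro y hy hya
    have hWy : 0 < W y := by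
      have := hWs 0 y hy hya (by simp [hW0])
      rwa [hW0] at this
    have h3 : ∀ᶠ l in atTop, ENNReal.ofReal (U l) < W y := by
      have := ENNReal.tendsto_ofReal hUlim
      rw [ENNReal.ofReal_zero] at this
      exact this.eventually_lt_const hWy
    obtain ⟨L, hL⟩ := ((eventually_gt_atTop (0:ℝ)).and h3).exists_forall_of_atTop
    refine ⟨max L 1, by positivity, fun l hl => ?_⟩
    obtain ⟨h4, h5⟩ := hL l ((le_max_left _ _).trans hl)
    rw [hUW l h4] at h5
    by_contra! hc
    exact absurd h5 (not_lt.2 (hWm hc.le))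

lemma W_fin_lt (a : ℝ≥0∞) (w : ℝ → ℝ)
    (hW_fin : ∀ t ∈ Iset a, ∫⁻ s in Set.Ioo 0 t, ENNReal.ofReal (w s) ≠ ∞)
    (x : ℝ≥0∞) (hx : x < a) : ∫⁻ s in Iset x, ENNReal.ofReal (w s) ≠ ∞ := by
  have hxt : x ≠ ⊤ := ne_top_of_lt hx
  rcases eq_or_ne x 0 with h0 | h0
  · subst h0
    have : Iset 0 = ∅ := by ext y; simp [Iset]
    simp [this]
  · have h1 : x.toReal ∈ Iset a := ⟨ENNReal.toReal_pos h0 hxt, by rwa [ENNReal.ofReal_toReal hxt]⟩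
    have h2 := hW_fin _ h1
    rwa [← Iset_ofReal ENNReal.toReal_nonneg, ENNReal.ofReal_toReal hxt] at h2

lemma W_fin_le (a : ℝ≥0∞) (w : ℝ → ℝ) (hw_anti : AntitoneOn w (Iset a))
    (hW_fin : ∀ t ∈ Iset a, ∫⁻ s in Set.Ioo 0 t, ENNReal.ofReal (w s) ≠ ∞)
    (x : ℝ≥0∞) (hx : x ≤ a) (hxt : x ≠ ⊤) : ∫⁻ s in Iset x, ENNReal.ofReal (w s) ≠ ∞ := by
  rcases hx.lt_or_eq with h | h
  · exact W_fin_lt a w hW_fin x h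
  subst h
  rcases eq_or_ne x 0 with h0 | h0
  · subst h0
    have : Iset 0 = ∅ := by ext y; simp [Iset]
    simp [this]
  have hlt : x / 2 < x := ENNReal.half_lt_self h0 hxt
  have h2t : x / 2 ≠ ⊤ := ne_top_of_lt hlt
  have hc : (x/2).toReal ∈ Iset x :=
    ⟨ENNReal.toReal_pos (by simp [h0]) h2t, by rwa [ENNReal.ofReal_toReal h2t]⟩
  have hsub : Iset x ⊆ Iset (x/2) ∪ (Iset x \ Iset (x/2)) := by
    intro y hy; by_cases h : y ∈ Iset (x/2)
    · exact Or.inl h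
    · exact Or.inr ⟨hy, h⟩
  refine ne_top_of_le_ne_top ?_ ((lintegral_mono_set hsub).trans (lintegral_union_le _ _ _))
  refine ENNReal.add_ne_top.2 ⟨W_fin_lt x w hW_fin _ hlt, ?_⟩
  have : ∫⁻ s in Iset x \ Iset (x/2), ENNReal.ofReal (w s)
      ≤ ∫⁻ s in Iset x \ Iset (x/2), ENNReal.ofReal (w (x/2).toReal) := by
    refine setLIntegral_mono measurable_const ?_
    intro y hy
    refine ENNReal.ofReal_le_ofReal (hw_anti hc hy.1 ?_)
    by_contra hcon
    refine hy.2 ⟨hy.1.1, ?_⟩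
    rw [ENNReal.ofReal_lt_iff_lt_toReal hy.1.1.le h2t]
    exact not_le.1 hcon
  refine ne_top_of_le_ne_top ?_ this
  rw [setLIntegral_const]
  refine ENNReal.mul_ne_top ENNReal.ofReal_ne_top ?_
  exact ne_top_of_le_ne_top (by rw [vol_Iset]; exact hxt) (measure_mono sdiff_subset)

lemma W_sup (a : ℝ≥0∞) (ha : 0 < a) (w : ℝ → ℝ)
    (hW_fin : ∀ t ∈ Iset a, ∫⁻ s in Set.Ioo 0 t, ENNReal.ofReal (w s) ≠ ∞)
    (K : ℝ≥0∞) (hK : K < ∫⁻ s in Iset a, ENNReal.ofReal (w s)) :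
    ∃ x, x < a ∧ K ≤ ∫⁻ s in Iset x, ENNReal.ofReal (w s) := by
  obtain ⟨u, hu, hua, hut⟩ := exists_seq_strictMono_tendsto' ha
  have hU : Iset a = ⋃ n, Iset (u n) := by
    ext y
    simp only [mem_iUnion]
    constructor
    · intro hy
      obtain ⟨n, hn⟩ := (hut.eventually (lt_mem_nhds hy.2)).exists
      exact ⟨n, hy.1, hn⟩
    · rintro ⟨n, hn⟩
      exact ⟨hn.1, hn.2.trans (hua n).2⟩
  have hmono : Monotone (fun n => Iset (u n)) := fun m n h => Iset_mono (hu.monotone h)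
  rw [hU, setLIntegral_iUnion_of_directed _ hmono.directed_le] at hK
  obtain ⟨n, hn⟩ := lt_iSup_iff.1 hK
  exact ⟨u n, (hua n).2, hn.le⟩

lemma W_strict (a : ℝ≥0∞) (w : ℝ → ℝ)
    (hw_pos : ∀ x ∈ Iset a, 0 < w x) (hw_meas : Measurable w)
    (x y : ℝ≥0∞) (hxy : x < y) (hya : y ≤ a)
    (hx : ∫⁻ s in Iset x, ENNReal.ofReal (w s) ≠ ∞) :
    ∫⁻ s in Iset x, ENNReal.ofReal (w s) < ∫⁻ s in Iset y, ENNReal.ofReal (w s) := by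
  have hsub : Iset x ⊆ Iset y := Iset_mono hxy.le
  have hd : Disjoint (Iset x) (Iset y \ Iset x) := disjoint_sdiff_right
  have hm : MeasurableSet (Iset y \ Iset x) := (measurableSet_Iset y).diff (measurableSet_Iset x)
  have h1 : Iset y = Iset x ∪ (Iset y \ Iset x) := (union_sdiff_cancel hsub).symm
  rw [h1, lintegral_union hm hd]
  refine ENNReal.lt_add_right hx ?_
  intro h0
  have h2 : volume (Iset y \ Iset x) ≠ 0 := by
    rw [measure_sdiff hsub (measurableSet_Iset x).nullMeasurableSet (by rw [vol_Iset]; exact ne_top_of_lt hxy), vol_Iset, vol_Iset]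
    exact (tsub_pos_of_lt hxy).ne'
  rw [lintegral_eq_zero_iff (by fun_prop)] at h0
  have h3 : ∀ᵐ t ∂(volume.restrict (Iset y \ Iset x)), False := by
    filter_upwards [h0, ae_restrict_mem hm] with t ht htm
    have := hw_pos t (Iset_mono hya htm.1)
    simp at ht
    linarith
  rw [eventually_false_iff_eq_bot, ae_eq_bot, Measure.restrict_eq_zero] at h3
  exact h2 h3

lemma F_bound (a : ℝ≥0∞) (w : ℝ → ℝ) 
    (hw_pos : ∀ x ∈ Iset a, 0 < w x) (hw_meas : Measurable w)
    (p : ℝ) (hp : 1 < p) (f : ℝ → ℝ) (hf : Measurable f) (x : ℝ≥0∞) (hx : x ≤ a)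
    (hW : ∫⁻ s in Iset x, ENNReal.ofReal (w s) ≠ ⊤) :
    ∫⁻ s in Iset x, rearr (volI a) f s ≤
      lorentzDualNorm a w p f * (∫⁻ s in Iset x, ENNReal.ofReal (w s)) ^ (1/p) := by
  classical
  rcases eq_or_ne x 0 with h0 | h0
  · subst h0
    have : Iset 0 = ∅ := by ext y; simp [Iset]
    simp [this]
  set V := ∫⁻ s in Iset x, ENNReal.ofReal (w s) with hV
  have hV0 : V ≠ 0 := by
    have hI0 : Iset 0 = ∅ := by ext y; simp [Iset]
    have := W_strict a w hw_pos hw_meas 0 x (pos_iff_ne_zero.2 h0) hx (by simp [hI0])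
    exact (pos_iff_ne_zero.1 (lt_of_le_of_lt zero_le this))
  have hp0 : 0 < p := by linarith
  set c := V ^ (-(1/p)) with hc
  have hct : c ≠ ⊤ := by
    rw [hc, ENNReal.rpow_neg]
    simp [hV0, hp0.le, hW]
  let h : ℝ → ℝ≥0∞ := fun t => if ENNReal.ofReal t < x then c else 0
  have hind : ∀ (u : ℝ → ℝ≥0∞) (d : ℝ≥0∞), ∫⁻ t in Iset a, u t * (if ENNReal.ofReal t < x then d else 0)
      ≥ ∫⁻ t in Iset x, u t * d := by
    intro u d
    calc _ ≥ ∫⁻ t in Iset x, u t * (if ENNReal.ofReal t < x then d else 0) :=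
          lintegral_mono_set (Iset_mono hx)
      _ = _ := by
          refine setLIntegral_congr_fun (measurableSet_Iset x) ?_
          intro t ht
          simp [ht.2]
  have hA : ∫⁻ t in Iset a, h t ^ p * ENNReal.ofReal (w t) ≤ 1 := by
    have : ∀ t ∈ Iset a, h t ^ p * ENNReal.ofReal (w t)
        = (Iset x).indicator (fun t => c ^ p * ENNReal.ofReal (w t)) t := by
      intro t ht
      by_cases htx : ENNReal.ofReal t < x
      · have : t ∈ Iset x := ⟨ht.1, htx⟩
        simp [h, htx, this]
      · have : t ∉ Iset x := fun h => htx h.2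
        simp [h, htx, this, hp0]
    rw [setLIntegral_congr_fun (measurableSet_Iset a) this]
    refine (setLIntegral_le_lintegral _ _).trans ?_
    rw [lintegral_indicator (measurableSet_Iset x), lintegral_const_mul _ (by fun_prop), ← hV, hc,
      ← ENNReal.rpow_mul]
    have : -(1/p) * p = -1 := by field_simp
    rw [this, ENNReal.rpow_neg_one, ENNReal.inv_mul_cancel hV0 hW]
  have := reson2 a w p hp f hf h ?_ ?_ hA
  · have h2 := (hind (rearr (volI a) f) c).trans this
    have hrm : Measurable (rearr (volI a) f) := rearrE_measurable _ _
    rw [lintegral_mul_const _ hrm] at h2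
    have h3 : c * V^(1/p) = 1 := by
      rw [hc, ← ENNReal.rpow_add _ _ hV0 hW]; simp
    calc ∫⁻ s in Iset x, rearr (volI a) f s
        = ((∫⁻ s in Iset x, rearr (volI a) f s) * c) * V^(1/p) := by rw [mul_assoc, h3, mul_one]
      _ ≤ _ := by gcongr
  · intro s t hst
    simp only [h]
    split_ifs with h1 h2 h2
    · exact le_rfl
    · exact absurd ((ENNReal.ofReal_le_ofReal hst).trans_lt h1) h2
    · exact zero_le
    · exact le_rfl
  · intro t
    simp only [h]
    split_ifs
    · exact hct
    · simp

lemma ton (a : ℝ≥0∞) (u : ℝ → ℝ≥0∞) (hu : Measurable u) (c : ℝ → ℝ≥0∞) (hc : Measurable c)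
    (x : ℝ → ℝ≥0∞) (hx : Antitone x) :
    ∫⁻ t in Iset a, u t * ∫⁻ l in {l | 0 < l ∧ ENNReal.ofReal t < x l}, c l
      = ∫⁻ l in Ioi (0:ℝ), c l * ∫⁻ t in Iset (min a (x l)), u t := by
  classical
  have hxm : Measurable x := hx.measurable
  have hS : MeasurableSet {z : ℝ × ℝ | ENNReal.ofReal z.1 < x z.2} :=
    measurableSet_lt (by fun_prop) (by fun_prop)
  have h1 : ∀ t, u t * ∫⁻ l in {l | 0 < l ∧ ENNReal.ofReal t < x l}, c l
      = ∫⁻ l in Ioi (0:ℝ), ({z : ℝ × ℝ | ENNReal.ofReal z.1 < x z.2}.indicator (fun z => u z.1 * c z.2)) (t, l) := by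
    intro t
    have hSt : MeasurableSet {l | ENNReal.ofReal t < x l} := measurableSet_lt (by fun_prop) hxm
    have : {l | 0 < l ∧ ENNReal.ofReal t < x l} = {l | ENNReal.ofReal t < x l} ∩ Ioi 0 := by
      ext l; simp [and_comm]
    rw [this, ← Measure.restrict_restrict hSt, ← lintegral_const_mul _ hc, ← lintegral_indicator hSt]
    rfl
  simp_rw [h1]
  rw [lintegral_lintegral_swap]
  · refine lintegral_congr fun l => ?_
    have hSl : MeasurableSet {t | ENNReal.ofReal t < x l} := measurableSet_lt (by fun_prop) (by fun_prop)
    have : Iset (min a (x l)) = {t | ENNReal.ofReal t < x l} ∩ Iset a := by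
      ext t; simp only [Iset, lt_min_iff, mem_ofPred_eq, mem_inter_iff]; tauto
    rw [this, ← Measure.restrict_restrict hSl, ← lintegral_const_mul _ hu, ← lintegral_indicator hSl]
    refine lintegral_congr fun t => ?_
    simp only [indicator_apply, mem_ofPred_eq, mul_comm]
  · exact (((hu.comp measurable_fst).mul (hc.comp measurable_snd)).indicator hS).aemeasurable

lemma key_A (a : ℝ≥0∞) (w : ℝ → ℝ) (hw_meas : Measurable w)
    (p q : ℝ) (hp : 1 < p) (hq : 1 < q) (hpq : 1/p + 1/q = 1)
    (f : ℝ → ℝ) (hf : Measurable f) (x : ℝ → ℝ≥0∞) (hx : Antitone x) (hxa : ∀ l, x l ≤ a)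
    (hxW : ∀ l, 0 < l → ∫⁻ s in Iset (x l), ENNReal.ofReal (w s) ≠ ⊤)
    (hxF : ∀ l, 0 < l → ∫⁻ s in Iset (x l), rearr (volI a) f s =
      ENNReal.ofReal l * (∫⁻ s in Iset (x l), ENNReal.ofReal (w s)) +
        ∫⁻ m in Ioi l, ∫⁻ s in Iset (x m), ENNReal.ofReal (w s))
    (hN : lorentzDualNorm a w p f ≠ ⊤)
    (ε k : ℝ) (hε : 0 < ε) (hk : ε < k) :
    ∫⁻ l in Ioo ε k, ENNReal.ofReal (q * l^(q-1)) * ∫⁻ s in Iset (x l), ENNReal.ofReal (w s)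
      ≤ lorentzDualNorm a w p f ^ q := by
  classical
  have hrm : Measurable (rearr (volI a) f) := rearrE_measurable _ _
  have hwm : Measurable (fun s => ENNReal.ofReal (w s)) := by fun_prop
  have hp0 : 0 < p := by linarith
  have hq0 : 0 < q := by linarith
  have hq1 : 0 < q - 1 := by linarith
  have hpq2 : (q - 1) * p = q := by field_simp at hpq; linarith
  have hk0 : 0 < k := hε.trans hk
  have hI0 : Iset 0 = ∅ := by ext y; simp [Iset]
  set W : ℝ≥0∞ → ℝ≥0∞ := fun y => ∫⁻ s in Iset y, ENNReal.ofReal (w s) with hWdef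
  set F : ℝ≥0∞ → ℝ≥0∞ := fun y => ∫⁻ s in Iset y, rearr (volI a) f s with hFdef
  have hW0 : W 0 = 0 := by simp [hWdef, hI0]
  have hF0 : F 0 = 0 := by simp [hFdef, hI0]
  have hWm : Monotone W := fun y z h => lintegral_mono_set (Iset_mono h)
  change ∫⁻ l in Ioo ε k, ENNReal.ofReal (q * l^(q-1)) * W (x l) ≤ _
  change ∀ l, 0 < l → W (x l) ≠ ⊤ at hxW
  change ∀ l, 0 < l → F (x l) = ENNReal.ofReal l * W (x l) + ∫⁻ m in Ioi l, W (x m) at hxF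
  set y : ℝ → ℝ≥0∞ := fun l => if l < k then x (max l ε) else 0 with hy
  have hya : ∀ l, y l ≤ a := by
    intro l; simp only [hy]; split_ifs
    · exact hxa _
    · exact zero_le
  have hyanti : Antitone y := by
    intro l m hlm
    simp only [hy]
    split_ifs with h1 h2 h2
    · exact hx (max_le_max_right _ hlm)
    · exact absurd (hlm.trans_lt h1) h2
    · exact zero_le
    · exact le_rfl
  have hyk : ∀ l, k ≤ l → y l = 0 := fun l hl => by simp [hy, not_lt.2 hl]
  have hyx : ∀ l, ε ≤ l → y l ≤ x l := by
    intro l hl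
    simp only [hy, max_eq_left hl]
    split_ifs
    · exact le_rfl
    · exact zero_le
  have hyx2 : ∀ l, ε ≤ l → l < k → y l = x l := by
    intro l hl hlk
    simp only [hy, max_eq_left hl, hlk, if_true]
  have hyx3 : ∀ l, l ≤ ε → y l = x ε := by
    intro l hl
    simp only [hy, max_eq_right hl, hl.trans_lt hk, if_true]
  have hWym : Measurable (fun l => W (y l)) := (hWm.comp_antitone hyanti).measurable
  have hWxm : Measurable (fun l => W (x l)) := (hWm.comp_antitone hx).measurable
  -- key inequality
  have hkey : ∀ l, 0 < l → ENNReal.ofReal l * W (y l) + ∫⁻ m in Ioi l, W (y m) ≤ F (y l) := by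
    intro l hl
    rcases le_or_gt k l with h1 | h1
    · have : ∫⁻ m in Ioi l, W (y m) = 0 := by
        rw [setLIntegral_congr_fun (g := fun _ => 0) measurableSet_Ioi]
        · simp
        · intro m hm
          simp only [hyk m (h1.trans (le_of_lt hm)), hW0]
      rw [this, hyk l h1, hW0]; simp
    have hbig : ∀ l, ε ≤ l → ∫⁻ m in Ioi l, W (y m) ≤ ∫⁻ m in Ioi l, W (x m) := by
      intro l hl
      exact setLIntegral_mono hWxm (fun m hm => hWm (hyx m (hl.trans (le_of_lt hm))))
    rcases le_or_gt ε l with h2 | h2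
    · rw [hyx2 l h2 h1, hxF l hl]
      exact add_le_add le_rfl (hbig l h2)
    · rw [hyx3 l h2.le, hxF ε hε]
      have h3 : ∫⁻ m in Ioi l, W (y m) ≤ ENNReal.ofReal (ε - l) * W (x ε) + ∫⁻ m in Ioi ε, W (x m) := by
        rw [← Ioc_union_Ioi_eq_Ioi h2.le]
        refine (lintegral_union_le _ _ _).trans (add_le_add ?_ (hbig ε le_rfl))
        rw [setLIntegral_congr_fun (g := fun _ => W (x ε)) measurableSet_Ioc]
        · simp [mul_comm]
        · intro m hm
          simp only [hyx3 m hm.2]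
      calc _ ≤ ENNReal.ofReal l * W (x ε) + (ENNReal.ofReal (ε - l) * W (x ε) + ∫⁻ m in Ioi ε, W (x m)) := by gcongr
        _ = (ENNReal.ofReal l + ENNReal.ofReal (ε - l)) * W (x ε) + ∫⁻ m in Ioi ε, W (x m) := by ring
        _ = _ := by rw [← ENNReal.ofReal_add hl.le (by linarith)]; ring_nf
  -- the test function
  set S : ℝ → Set ℝ := fun t => {l | 0 < l ∧ ENNReal.ofReal t < y l} with hS
  have hS0 : ∀ t, S t ⊆ Ioi 0 := fun t l hl => hl.1
  have hSd : ∀ t, ∀ l ∈ S t, ∀ m, 0 < m → m < l → m ∈ S t := fun t l hl m hm hml =>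
    ⟨hm, hl.2.trans_le (hyanti hml.le)⟩
  have hSk : ∀ t, volume (S t) ≤ ENNReal.ofReal k := by
    intro t
    have : S t ⊆ Ioo 0 k := by
      intro l hl
      refine ⟨hl.1, ?_⟩
      by_contra h
      have := hl.2
      rw [hyk l (not_lt.1 h)] at this
      exact absurd this (by simp)
    refine (measure_mono this).trans ?_
    simp
  have hSanti : ∀ t u, t ≤ u → volume (S u) ≤ volume (S t) := fun t u htu =>
    measure_mono fun l hl => ⟨hl.1, (ENNReal.ofReal_le_ofReal htu).trans_lt hl.2⟩
  set h : ℝ → ℝ≥0∞ := fun t => volume (S t) ^ (q-1) with hh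
  have hhanti : Antitone h := fun t u htu => ENNReal.rpow_le_rpow (hSanti t u htu) hq1.le
  have hht : ∀ t, h t ≠ ⊤ := fun t =>
    ENNReal.rpow_ne_top_of_nonneg hq1.le (ne_top_of_le_ne_top ENNReal.ofReal_ne_top (hSk t))
  have hmin : ∀ l, min a (y l) = y l := fun l => min_eq_right (hya l)
  set A := ∫⁻ t in Iset a, h t ^ p * ENNReal.ofReal (w t) with hA
  have hA1 : A = ∫⁻ l in Ioi (0:ℝ), ENNReal.ofReal (q * l^(q-1)) * W (y l) := by
    have := ton a _ hwm (fun l => ENNReal.ofReal (q * l^(q-1))) (by fun_prop) y hyanti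
    simp only [hmin] at this
    rw [← this, hA]
    refine lintegral_congr fun t => ?_
    rw [lint_pow q hq0 _ (hS0 t) (hSd t), hh]
    simp only
    rw [← ENNReal.rpow_mul, hpq2, mul_comm]
  have hB1 : ∫⁻ t in Iset a, rearr (volI a) f t * h t
      = ∫⁻ l in Ioi (0:ℝ), ENNReal.ofReal ((q-1) * l^(q-1-1)) * F (y l) := by
    have := ton a _ hrm (fun l => ENNReal.ofReal ((q-1) * l^(q-1-1))) (by fun_prop) y hyanti
    simp only [hmin] at this
    rw [← this]
    refine lintegral_congr fun t => ?_
    rw [lint_pow (q-1) hq1 _ (hS0 t) (hSd t)]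
  have hAfin : A ≠ ⊤ := by
    rw [hA1]
    have : ∀ l ∈ Ioi (0:ℝ), ENNReal.ofReal (q * l^(q-1)) * W (y l)
        ≤ (Ioo 0 k).indicator (fun l => ENNReal.ofReal (q * l^(q-1)) * W (x ε)) l := by
      intro l hl
      by_cases hlk : l < k
      · rw [indicator_of_mem (by exact ⟨hl, hlk⟩)]
        gcongr
        apply hWm
        rcases le_or_gt l ε with h | h
        · rw [hyx3 l h]
        · exact (hyx l h.le).trans (hx h.le)
      · rw [hyk l (not_lt.1 hlk), hW0]; simp
    have hmeas : Measurable (fun l => (Ioo 0 k).indicator (fun l => ENNReal.ofReal (q * l^(q-1)) * W (x ε)) l) :=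
      Measurable.indicator (by fun_prop) measurableSet_Ioo
    refine ne_top_of_le_ne_top ?_ ((setLIntegral_mono hmeas this).trans (setLIntegral_le_lintegral _ _))
    rw [lintegral_indicator measurableSet_Ioo, lintegral_mul_const _ (by fun_prop), lint_pow_Ioo q k hq0 hk0.le]
    exact ENNReal.mul_ne_top (ENNReal.rpow_ne_top_of_nonneg hq0.le ENNReal.ofReal_ne_top) (hxW ε hε)
  -- A ≤ B
  have hAB : A ≤ ∫⁻ t in Iset a, rearr (volI a) f t * h t := by
    rw [hB1, hA1]
    have h1 : ∫⁻ l in Ioi (0:ℝ), ENNReal.ofReal ((q-1) * l^(q-1-1)) * ∫⁻ m in Ioi l, W (y m)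
        = ∫⁻ m in Ioi (0:ℝ), ENNReal.ofReal (m^(q-1)) * W (y m) := by
      have hT : MeasurableSet {z : ℝ × ℝ | z.1 < z.2} := measurableSet_lt measurable_fst measurable_snd
      have e1 : ∀ l ∈ Ioi (0:ℝ), ENNReal.ofReal ((q-1) * l^(q-1-1)) * ∫⁻ m in Ioi l, W (y m)
          = ∫⁻ m in Ioi (0:ℝ), ({z : ℝ × ℝ | z.1 < z.2}.indicator
            (fun z => ENNReal.ofReal ((q-1) * z.1^(q-1-1)) * W (y z.2))) (l, m) := by
        intro l hl
        have : Ioi l = Ioi l ∩ Ioi (0:ℝ) := (inter_eq_left.2 (Ioi_subset_Ioi (le_of_lt hl))).symm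
        rw [this, ← Measure.restrict_restrict measurableSet_Ioi, ← lintegral_const_mul _ hWym,
          ← lintegral_indicator measurableSet_Ioi]
        rfl
      rw [setLIntegral_congr_fun measurableSet_Ioi e1, lintegral_lintegral_swap]
      · refine setLIntegral_congr_fun measurableSet_Ioi ?_
        intro m hm
        have hm0 : (0:ℝ) < m := hm
        have e2 : ENNReal.ofReal (m^(q-1)) = ∫⁻ l in Ioo 0 m, ENNReal.ofReal ((q-1) * l^(q-1-1)) := by
          rw [lint_pow_Ioo (q-1) m hq1 hm0.le, ENNReal.ofReal_rpow_of_pos hm0]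
        have e3 : Ioo 0 m = Iio m ∩ Ioi (0:ℝ) := by ext l; simp [and_comm]
        simp only
        rw [e2, e3, ← Measure.restrict_restrict measurableSet_Iio, ← lintegral_mul_const _ (by fun_prop),
          ← lintegral_indicator measurableSet_Iio]
        rfl
      · refine (Measurable.indicator ?_ hT).aemeasurable
        exact Measurable.mul (by fun_prop) (hWym.comp measurable_snd)
    have hmm : Measurable (fun l : ℝ => ENNReal.ofReal ((q-1) * l^(q-1-1)) * (ENNReal.ofReal l * W (y l))) :=
      Measurable.mul (by fun_prop) (Measurable.mul (by fun_prop) hWym)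
    calc ∫⁻ l in Ioi (0:ℝ), ENNReal.ofReal (q * l^(q-1)) * W (y l)
        = (∫⁻ l in Ioi (0:ℝ), ENNReal.ofReal ((q-1) * l^(q-1-1)) * (ENNReal.ofReal l * W (y l)))
          + ∫⁻ m in Ioi (0:ℝ), ENNReal.ofReal (m^(q-1)) * W (y m) := by
          rw [← lintegral_add_left hmm]
          refine setLIntegral_congr_fun measurableSet_Ioi ?_
          intro l hl
          have hl0 : (0:ℝ) < l := hl
          have hlp : 0 < l^(q-1) := Real.rpow_pos_of_pos hl0 _
          simp only
          rw [← mul_assoc, ← add_mul, ← ENNReal.ofReal_mul (by positivity), ← ENNReal.ofReal_add (by positivity) hlp.le]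
          congr 2
          rw [Real.rpow_sub_one hl0.ne' (q-1)]
          field_simp
          ring
      _ = ∫⁻ l in Ioi (0:ℝ), ENNReal.ofReal ((q-1) * l^(q-1-1)) * (ENNReal.ofReal l * W (y l) + ∫⁻ m in Ioi l, W (y m)) := by
          rw [← h1, ← lintegral_add_left hmm]
          simp only [mul_add]
      _ ≤ _ := by
          refine setLIntegral_mono' measurableSet_Ioi ?_
          intro l hl
          gcongr
          exact hkey l hl
  have hfinal : A ≤ lorentzDualNorm a w p f ^ q := by
    rcases eq_or_ne A 0 with h0 | h0
    · rw [h0]; exact zero_le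
    set c := A ^ (-(1/p)) with hc
    have hct : c ≠ ⊤ := by
      rw [hc, ENNReal.rpow_neg]
      simp [h0, hp0.le, hAfin]
    have hc1 : c ^ p * A = 1 := by
      rw [hc, ← ENNReal.rpow_mul]
      have : -(1/p) * p = -1 := by field_simp
      rw [this, ENNReal.rpow_neg_one, ENNReal.inv_mul_cancel h0 hAfin]
    have hhm : Measurable h := hhanti.measurable
    have hr := reson2 a w p hp f hf (fun t => c * h t) (fun s t hst => mul_le_mul_right (hhanti hst) c)
      (fun t => ENNReal.mul_ne_top hct (hht t)) (by
        have : ∀ t, (c * h t)^p * ENNReal.ofReal (w t) = c^p * (h t ^ p * ENNReal.ofReal (w t)) := by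
          intro t; rw [ENNReal.mul_rpow_of_nonneg _ _ hp0.le, mul_assoc]
        simp only [this]
        rw [lintegral_const_mul _ (by fun_prop), ← hA, hc1])
    have e : ∀ t, rearr (volI a) f t * (c * h t) = c * (rearr (volI a) f t * h t) := fun t => by ring
    simp only [e] at hr
    rw [lintegral_const_mul _ (by fun_prop)] at hr
    have h5 : c * A ≤ lorentzDualNorm a w p f := le_trans (by gcongr) hr
    have h6 : c * A = A ^ (1/q) := by
      conv_lhs => rw [hc, show A ^ (-(1/p)) * A = A ^ (-(1/p)) * A ^ (1:ℝ) by simp]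
      rw [← ENNReal.rpow_add _ _ h0 hAfin]
      congr 1; linarith
    rw [h6] at h5
    calc A = (A^(1/q))^q := by rw [← ENNReal.rpow_mul]; simp [hq0.ne']
      _ ≤ _ := by gcongr
  refine le_trans ?_ hfinal
  rw [hA1]
  calc ∫⁻ l in Ioo ε k, ENNReal.ofReal (q * l^(q-1)) * W (x l)
      = ∫⁻ l in Ioo ε k, ENNReal.ofReal (q * l^(q-1)) * W (y l) := by
        refine setLIntegral_congr_fun measurableSet_Ioo ?_
        intro l hl
        simp only [hyx2 l hl.1.le hl.2]
    _ ≤ _ := lintegral_mono_set (fun l hl => hε.trans hl.1)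

lemma key_A2 (a : ℝ≥0∞) (w : ℝ → ℝ) (hw_meas : Measurable w)
    (p q : ℝ) (hp : 1 < p) (hq : 1 < q) (hpq : 1/p + 1/q = 1)
    (f : ℝ → ℝ) (hf : Measurable f) (x : ℝ → ℝ≥0∞) (hx : Antitone x) (hxa : ∀ l, x l ≤ a)
    (hxW : ∀ l, 0 < l → ∫⁻ s in Iset (x l), ENNReal.ofReal (w s) ≠ ⊤)
    (hxF : ∀ l, 0 < l → ∫⁻ s in Iset (x l), rearr (volI a) f s =
      ENNReal.ofReal l * (∫⁻ s in Iset (x l), ENNReal.ofReal (w s)) +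
        ∫⁻ m in Ioi l, ∫⁻ s in Iset (x m), ENNReal.ofReal (w s))
    (hN : lorentzDualNorm a w p f ≠ ⊤) :
    ∫⁻ l in Ioi (0:ℝ), ENNReal.ofReal (q * l^(q-1)) * ∫⁻ s in Iset (x l), ENNReal.ofReal (w s)
      ≤ lorentzDualNorm a w p f ^ q := by
  have hU : Ioi (0:ℝ) = ⋃ n : ℕ, Ioo (1/((n:ℝ)+2)) ((n:ℝ)+2) := by
    ext l
    simp only [mem_iUnion, mem_Ioi, mem_Ioo]
    constructor
    · intro hl
      obtain ⟨n, hn⟩ := exists_nat_gt (max l (1/l))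
      have h1 : l < n := (le_max_left _ _).trans_lt hn
      have h2 : 1/l < n := (le_max_right _ _).trans_lt hn
      refine ⟨n, ?_, by linarith⟩
      rw [div_lt_iff₀ (by positivity)]
      rw [div_lt_iff₀ hl] at h2
      nlinarith
    · rintro ⟨n, h1, h2⟩
      exact lt_trans (by positivity) h1
  have hmono : Monotone (fun n : ℕ => Ioo (1/((n:ℝ)+2)) ((n:ℝ)+2)) := by
    intro m n hmn
    have : (m:ℝ) ≤ n := by exact_mod_cast hmn
    refine Ioo_subset_Ioo ?_ (by linarith)
    exact one_div_le_one_div_of_le (by positivity) (by linarith)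
  rw [hU, setLIntegral_iUnion_of_directed _ hmono.directed_le]
  refine iSup_le fun n => ?_
  refine key_A a w hw_meas p q hp hq hpq f hf x hx hxa hxW hxF hN _ _ (by positivity) ?_
  rw [div_lt_iff₀ (by positivity)]
  have : (0:ℝ) ≤ n := by positivity
  nlinarith

lemma rearrE_le_self (a : ℝ≥0∞) (G : ℝ → ℝ≥0∞) (hG : AntitoneOn G (Iset a)) (t : ℝ) (ht : t ∈ Iset a) :
    rearrE (volI a) G t ≤ G t := by
  by_contra hcon
  rw [not_le, lt_rearrE] at hcon
  have : volI a {x | G t < G x} ≤ ENNReal.ofReal t := by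
    rw [volI, Measure.restrict_apply' (measurableSet_Iset a)]
    have hs : {x | G t < G x} ∩ Iset a ⊆ Ioo 0 t := by
      rintro x ⟨h1, h2⟩
      refine ⟨h2.1, ?_⟩
      by_contra h
      exact absurd (hG ht h2 (not_lt.1 h)) (not_le.2 h1)
    refine (measure_mono hs).trans ?_
    simp
  exact absurd hcon (not_lt.2 this)

lemma dom (a : ℝ≥0∞) (w : ℝ → ℝ) (hw_meas : Measurable w) (x : ℝ → ℝ≥0∞) (hx : Antitone x)
    (Fy y : ℝ≥0∞)
    (hWy : ∫⁻ s in Iset y, ENNReal.ofReal (w s) ≠ ⊤)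
    (hF : ∀ l, 0 < l → Fy ≤ ENNReal.ofReal l * (∫⁻ s in Iset y, ENNReal.ofReal (w s)) +
      ∫⁻ m in Ioi l, ∫⁻ s in Iset (x m), ENNReal.ofReal (w s))
    (hL : ∃ L, 0 < L ∧ ∀ l, L ≤ l → x l ≤ y) :
    Fy ≤ ∫⁻ t in Iset y, ENNReal.ofReal (w t) * volume {l | 0 < l ∧ ENNReal.ofReal t < x l} := by
  have hwm : Measurable (fun s => ENNReal.ofReal (w s)) := by fun_prop
  have ht := ton y _ hwm (fun _ => 1) measurable_const x hx
  simp only [setLIntegral_one, one_mul] at ht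
  rw [ht]
  set W : ℝ≥0∞ → ℝ≥0∞ := fun y => ∫⁻ s in Iset y, ENNReal.ofReal (w s) with hWdef
  have hWm : Monotone W := fun y z h => lintegral_mono_set (Iset_mono h)
  change W y ≠ ⊤ at hWy
  change ∀ l, 0 < l → Fy ≤ ENNReal.ofReal l * W y + ∫⁻ m in Ioi l, W (x m) at hF
  change Fy ≤ ∫⁻ l in Ioi (0:ℝ), W (min y (x l))
  obtain ⟨L, hL0, hL⟩ := hL
  set S : Set ℝ := {l | 0 < l ∧ y < x l} with hS
  have hSfin : volume S ≠ ⊤ := by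
    have : S ⊆ Ioo 0 L := by
      rintro l ⟨h1, h2⟩
      refine ⟨h1, ?_⟩
      by_contra h
      exact absurd (hL l (not_lt.1 h)) (not_le.2 h2)
    refine ne_top_of_le_ne_top ?_ (measure_mono this)
    simp
  set l0 := (volume S).toReal with hl0
  have hl00 : 0 ≤ l0 := ENNReal.toReal_nonneg
  have hvS : volume S = ENNReal.ofReal l0 := (ENNReal.ofReal_toReal hSfin).symm
  have hgt : ∀ l, l0 < l → x l ≤ y := by
    intro l hl
    by_contra h
    have hsub : Ioo 0 l ⊆ S := fun m hm => ⟨hm.1, (not_le.1 h).trans_le (hx hm.2.le)⟩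
    have := measure_mono (μ := volume) hsub
    rw [hvS, Real.volume_Ioo, sub_zero, ENNReal.ofReal_le_ofReal_iff hl00] at this
    linarith
  have hlt : ∀ m, 0 < m → m < l0 → y < x m := by
    intro m hm hml
    by_contra h
    have hsub : S ⊆ Ioo 0 m := by
      rintro l ⟨h1, h2⟩
      refine ⟨h1, ?_⟩
      by_contra h'
      exact absurd ((hx (not_lt.1 h')).trans (not_lt.1 h)) (not_le.2 h2)
    have := measure_mono (μ := volume) hsub
    rw [hvS, Real.volume_Ioo, sub_zero, ENNReal.ofReal_le_ofReal_iff hm.le] at this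
    linarith
  set G := ∫⁻ l in Ioi (0:ℝ), W (min y (x l)) with hG
  have hmain : ∀ δ, 0 < δ → Fy ≤ G + ENNReal.ofReal δ * W y := by
    intro δ hδ
    have h1 := hF (l0 + δ) (by linarith)
    have h2 : ENNReal.ofReal l0 * W y + ∫⁻ m in Ioi (l0 + δ), W (x m) ≤ G := by
      have hd : Disjoint (Ioo 0 l0) (Ioi (l0 + δ)) := by
        rw [Set.disjoint_left]
        intro m hm hm2
        have : l0 + δ < m := hm2
        linarith [hm.2]
      have hsub : Ioo 0 l0 ∪ Ioi (l0 + δ) ⊆ Ioi 0 := by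
        rintro m (hm | hm)
        · exact hm.1
        · have : l0 + δ < m := hm
          exact lt_trans (by linarith) this
      refine le_trans ?_ (lintegral_mono_set hsub)
      rw [lintegral_union measurableSet_Ioi hd]
      refine add_le_add (le_of_eq ?_) (le_of_eq ?_)
      · rw [setLIntegral_congr_fun (g := fun _ => W y) measurableSet_Ioo]
        · simp [mul_comm]
        · intro m hm
          simp only [min_eq_left (hlt m hm.1 hm.2).le]
      · refine setLIntegral_congr_fun measurableSet_Ioi ?_
        intro m hm
        have : l0 + δ < m := hm
        simp only [min_eq_right (hgt m (by linarith))]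
    rw [ENNReal.ofReal_add hl00 hδ.le] at h1
    calc Fy ≤ _ := h1
      _ = (ENNReal.ofReal l0 * W y + ∫⁻ m in Ioi (l0 + δ), W (x m)) + ENNReal.ofReal δ * W y := by ring
      _ ≤ _ := by gcongr
  refine ENNReal.le_of_forall_pos_le_add fun e he _ => ?_
  have hd : (0:ℝ) < e / ((W y).toReal + 1) := by positivity
  refine (hmain _ hd).trans ?_
  gcongr
  have hWe : W y = ENNReal.ofReal (W y).toReal := (ENNReal.ofReal_toReal hWy).symm
  set V := (W y).toReal with hV
  have hV0 : 0 ≤ V := ENNReal.toReal_nonneg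
  rw [hWe, ← ENNReal.ofReal_mul hd.le, ← ENNReal.ofReal_coe_nnreal]
  refine ENNReal.ofReal_le_ofReal ?_
  rw [div_mul_eq_mul_div, div_le_iff₀ (by positivity)]
  nlinarith [e.2]

lemma lint_cut (a : ℝ≥0∞) (f : ℝ → ℝ) (x : ℝ) (hx : 0 < x) :
    ∫⁻ t in Ioo 0 x, rearr (volI a) f t = ∫⁻ t in Iset (min (ENNReal.ofReal x) a), rearr (volI a) f t := by
  rw [← Iset_ofReal hx.le, ← Iset_inter, inter_comm, ← Measure.restrict_restrict (measurableSet_Iset a),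
    ← lintegral_indicator (measurableSet_Iset a)]
  refine setLIntegral_congr_fun (measurableSet_Iset _) ?_
  intro t ht
  by_cases h : t ∈ Iset a
  · simp [h]
  · simp only [h, not_false_eq_true, indicator_of_notMem]
    refine rearrE_eq_zero a _ ?_
    by_contra h2
    exact h ⟨ht.1, not_le.1 h2⟩

lemma easy_dir (a : ℝ≥0∞) (w : ℝ → ℝ)
    (hw_pos : ∀ x ∈ Iset a, 0 < w x) (hw_meas : Measurable w)
    (p q : ℝ) (hp : 1 < p) (hpq : 1/p + 1/q = 1)
    (f g : ℝ → ℝ) (hf : Measurable f) 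
    (hfg : ∀ x : ℝ, 0 < x →
            ∫⁻ t in Set.Ioo 0 x, rearr (volI a) f t ≤ ∫⁻ t in Set.Ioo 0 x, rearr (volI a) g t) :
    lorentzDualNorm a w p f ≤ (∫⁻ t in Iset a,
                rearr (volI a) g t ^ q * ENNReal.ofReal (w t) ^ (1 - q)) ^ (1/q) := by
  refine sSup_le ?_
  rintro c ⟨u, hu, hu1, rfl⟩
  have h1 := HL2 a (fun x => ENNReal.ofReal |f x|) (fun x => ENNReal.ofReal |u x|)
    (fun x => ENNReal.ofReal |g x|) (by fun_prop) (by fun_prop) hfg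
  have h2 := holder_w (Iset a) (measurableSet_Iset a) w hw_meas hw_pos p q hp hpq
    (rearr (volI a) g) (rearr (volI a) u) (rearrE_measurable _ _) (rearrE_measurable _ _)
  have e : ∀ x, ENNReal.ofReal |f x * u x| = ENNReal.ofReal |f x| * ENNReal.ofReal |u x| := by
    intro x; rw [abs_mul, ENNReal.ofReal_mul (abs_nonneg _)]
  simp only [e]
  refine h1.trans (h2.trans ?_)
  refine (mul_le_mul_right (ENNReal.rpow_le_one hu1 (by positivity)) _).trans ?_
  rw [mul_one]

lemma hard_dir (a : ℝ≥0∞) (ha : 0 < a) (w : ℝ → ℝ)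
    (hw_pos : ∀ x ∈ Iset a, 0 < w x) (hw_anti : AntitoneOn w (Iset a)) (hw_meas : Measurable w)
    (hW_fin : ∀ t ∈ Iset a, ∫⁻ s in Set.Ioo 0 t, ENNReal.ofReal (w s) ≠ ∞)
    (p q : ℝ) (hp : 1 < p) (hpq : 1/p + 1/q = 1)
    (f : ℝ → ℝ) (hf : Measurable f)
    (hfin : lorentzDualNorm a w p f ≠ ∞) :
    ∃ g : ℝ → ℝ, Measurable g ∧
          (∀ x : ℝ, 0 < x → ∫⁻ t in Set.Ioo 0 x, rearr (volI a) g t ≠ ∞) ∧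
          (∀ x : ℝ, 0 < x →
            ∫⁻ t in Set.Ioo 0 x, rearr (volI a) f t ≤ ∫⁻ t in Set.Ioo 0 x, rearr (volI a) g t) ∧
          (∫⁻ t in Iset a,
                rearr (volI a) g t ^ q * ENNReal.ofReal (w t) ^ (1 - q)) ^ (1/q) ≤ lorentzDualNorm a w p f := by
  classical
  have hp0 : 0 < p := by linarith
  have hq : 1 < q := by
    have h1 : 1/p < 1 := by rw [div_lt_one hp0]; exact hp
    have h2 : 0 < 1/q := by linarith
    have h3 : 0 < q := by simpa using h2
    have h4 : 0 < 1/p := by positivity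
    have h5 : 1/q < 1 := by linarith
    rwa [div_lt_one h3] at h5
  have hq0 : 0 < q := by linarith
  have hI0 : Iset 0 = ∅ := by ext y; simp [Iset]
  have hwm : Measurable (fun s => ENNReal.ofReal (w s)) := by fun_prop
  set W : ℝ≥0∞ → ℝ≥0∞ := fun y => ∫⁻ s in Iset y, ENNReal.ofReal (w s) with hWdef
  set F : ℝ≥0∞ → ℝ≥0∞ := fun y => ∫⁻ s in Iset y, rearr (volI a) f s with hFdef
  have hWfl : ∀ x, x ≤ a → x ≠ ⊤ → W x ≠ ⊤ := fun x hx hxt => W_fin_le a w hw_anti hW_fin x hx hxt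
  have hFb0 : ∀ x, x ≤ a → W x ≠ ⊤ → F x ≤ lorentzDualNorm a w p f * W x ^ (1/p) :=
    fun x hx hWx => F_bound a w hw_pos hw_meas p hp f hf x hx hWx
  have hFb1 : ∀ x, x ≤ a → W x ≠ ⊤ → F x ≠ ⊤ := fun x hx hWx =>
    ne_top_of_le_ne_top (ENNReal.mul_ne_top hfin
      (ENNReal.rpow_ne_top_of_nonneg (by positivity) hWx)) (hFb0 x hx hWx)
  obtain ⟨x, hx, hxa, hxW, hxF, hFy, hxL⟩ := level a F W p q (lorentzDualNorm a w p f).toReal hp hq hpq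
    ENNReal.toReal_nonneg (by simp [hFdef, hI0]) (by simp [hWdef, hI0])
    (fun y z h => lintegral_mono_set (Iset_mono h))
    (fun x hxa => W_fin_lt a w hW_fin x hxa)
    (fun K hK => by
      obtain ⟨x, hxa, hKx⟩ := W_sup a ha w hW_fin K hK
      exact ⟨x, hxa.le, hKx, Or.inl (W_fin_lt a w hW_fin x hxa)⟩)
    (fun x y hxy hya hWx => W_strict a w hw_pos hw_meas x y hxy hya hWx)
    (fun x hxa hWx => ⟨hFb1 x hxa hWx, by
      have := ENNReal.toReal_mono (ENNReal.mul_ne_top hfin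
        (ENNReal.rpow_ne_top_of_nonneg (by positivity) hWx)) (hFb0 x hxa hWx)
      rwa [ENNReal.toReal_mul, ← ENNReal.toReal_rpow] at this⟩)
    (fun X hX hWX => cont_prim _ (rearrE_measurable _ _) X (hFb1 X hX hWX))
    (fun X hX hWX => cont_prim _ hwm X hWX)
  have hA := key_A2 a w hw_meas p q hp hq hpq f hf x hx hxa hxW hxF hfin
  set φ : ℝ → ℝ≥0∞ := fun t => volume {l | 0 < l ∧ ENNReal.ofReal t < x l} with hφ
  have hφanti : Antitone φ := fun t u htu =>
    measure_mono fun l hl => ⟨hl.1, (ENNReal.ofReal_le_ofReal htu).trans_lt hl.2⟩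
  have hφm : Measurable φ := hφanti.measurable
  have hφfin : ∀ t ∈ Iset a, φ t ≠ ⊤ := by
    intro t ht
    obtain ⟨L, hL0, hL⟩ := hxL (ENNReal.ofReal t) (by simpa using ht.1) ht.2.le
    have : {l | 0 < l ∧ ENNReal.ofReal t < x l} ⊆ Ioo 0 L := by
      rintro l ⟨h1, h2⟩
      refine ⟨h1, ?_⟩
      by_contra h
      exact absurd (hL l (not_lt.1 h)) (not_le.2 h2)
    refine ne_top_of_le_ne_top ?_ (measure_mono this)
    simp
  have hAφ : ∫⁻ t in Iset a, ENNReal.ofReal (w t) * φ t ^ q ≤ lorentzDualNorm a w p f ^ q := by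
    have ht := ton a _ hwm (fun l => ENNReal.ofReal (q * l^(q-1))) (by fun_prop) x hx
    simp only [fun l => min_eq_right (hxa l)] at ht
    refine le_trans (le_of_eq ?_) hA
    rw [← ht]
    refine lintegral_congr fun t => ?_
    rw [lint_pow q hq0 {l | 0 < l ∧ ENNReal.ofReal t < x l} (fun l hl => hl.1) (fun l hl m hm hml => ⟨hm, hl.2.trans_le (hx hml.le)⟩)]
  set g : ℝ → ℝ := fun t => w t * (φ t).toReal with hg
  have hgm : Measurable g := hw_meas.mul hφm.ennreal_toReal
  have hgG : ∀ t ∈ Iset a, ENNReal.ofReal |g t| = ENNReal.ofReal (w t) * φ t := by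
    intro t ht
    simp only [hg]
    rw [abs_of_nonneg (mul_nonneg (hw_pos t ht).le ENNReal.toReal_nonneg),
      ENNReal.ofReal_mul (hw_pos t ht).le, ENNReal.ofReal_toReal (hφfin t ht)]
  have hganti : AntitoneOn (fun t => ENNReal.ofReal |g t|) (Iset a) := by
    intro s hs t ht hst
    simp only [hgG s hs, hgG t ht]
    exact mul_le_mul' (ENNReal.ofReal_le_ofReal (hw_anti hs ht hst)) (hφanti hst)
  have hgle : ∀ t ∈ Iset a, rearr (volI a) g t ≤ ENNReal.ofReal (w t) * φ t := by
    intro t ht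
    rw [← hgG t ht]
    exact rearrE_le_self a _ hganti t ht
  have hpow : ∀ t ∈ Iset a, (ENNReal.ofReal (w t) * φ t) ^ q * ENNReal.ofReal (w t) ^ (1 - q)
      = ENNReal.ofReal (w t) * φ t ^ q := by
    intro t ht
    have hw0 : ENNReal.ofReal (w t) ≠ 0 := by simpa using hw_pos t ht
    rw [ENNReal.mul_rpow_of_nonneg _ _ hq0.le, mul_right_comm, ← ENNReal.rpow_add _ _ hw0 ENNReal.ofReal_ne_top]
    simp
  have hbound : ∫⁻ t in Iset a, (ENNReal.ofReal (w t) * φ t) ^ q * ENNReal.ofReal (w t) ^ (1 - q)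
      ≤ lorentzDualNorm a w p f ^ q := by
    rw [setLIntegral_congr_fun (measurableSet_Iset a) hpow]
    exact hAφ
  refine ⟨g, hgm, ?_, ?_, ?_⟩
  · intro r hr
    rw [lint_cut a g r hr]
    set y := min (ENNReal.ofReal r) a with hy
    have hya : y ≤ a := min_le_right _ _
    have hyt : y ≠ ⊤ := ne_top_of_le_ne_top ENNReal.ofReal_ne_top (min_le_left _ _)
    have hWy := hWfl y hya hyt
    have h1 : ∫⁻ t in Iset y, rearr (volI a) g t ≤ ∫⁻ t in Iset y, (ENNReal.ofReal (w t) * φ t) * 1 := by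
      refine setLIntegral_mono' (measurableSet_Iset y) ?_
      intro t ht
      rw [mul_one]
      exact hgle t (Iset_mono hya ht)
    have h2 := holder_w (Iset y) (measurableSet_Iset y) w hw_meas (fun t ht => hw_pos t (Iset_mono hya ht))
      p q hp hpq (fun t => ENNReal.ofReal (w t) * φ t) (fun _ => 1) (hwm.mul hφm) measurable_const
    refine ne_top_of_le_ne_top ?_ (h1.trans h2)
    refine ENNReal.mul_ne_top (ENNReal.rpow_ne_top_of_nonneg (by positivity) ?_)
      (ENNReal.rpow_ne_top_of_nonneg (by positivity) ?_)
    · exact ne_top_of_le_ne_top (ENNReal.rpow_ne_top_of_nonneg hq0.le hfin)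
        ((lintegral_mono_set (Iset_mono hya)).trans hbound)
    · simpa using hWy
  · intro r hr
    rw [lint_cut a g r hr, lint_cut a f r hr]
    set y := min (ENNReal.ofReal r) a with hy
    have hya : y ≤ a := min_le_right _ _
    have hy0 : 0 < y := lt_min (by simpa using hr) ha
    have hyt : y ≠ ⊤ := ne_top_of_le_ne_top ENNReal.ofReal_ne_top (min_le_left _ _)
    have hWy := hWfl y hya hyt
    have h1 := dom a w hw_meas x hx (F y) y hWy (fun l hl => hFy l hl y hya hWy) (hxL y hy0 hya)
    refine h1.trans ?_
    have h2 := HL1 (volI a) (fun t => ENNReal.ofReal |g t|) (by fun_prop) (Iset y)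
    have h3 : volI a (Iset y) = y := by
      rw [volI, Measure.restrict_apply (measurableSet_Iset y), Iset_inter, min_eq_left hya, vol_Iset]
    rw [h3] at h2
    refine le_trans (le_of_eq ?_) h2
    rw [volI, Measure.restrict_restrict (measurableSet_Iset y), Iset_inter, min_eq_left hya]
    refine setLIntegral_congr_fun (measurableSet_Iset y) ?_
    intro t ht
    exact (hgG t (Iset_mono hya ht)).symm
  · have h1 : ∫⁻ t in Iset a, rearr (volI a) g t ^ q * ENNReal.ofReal (w t) ^ (1 - q)
        ≤ lorentzDualNorm a w p f ^ q := by
      refine le_trans (setLIntegral_mono' (measurableSet_Iset a) ?_) hbound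
      intro t ht
      gcongr
      exact hgle t ht
    calc _ ≤ (lorentzDualNorm a w p f ^ q) ^ (1/q) := ENNReal.rpow_le_rpow h1 (by positivity)
      _ = lorentzDualNorm a w p f := by
        have hqne : q ≠ 0 := by linarith
        rw [← ENNReal.rpow_mul, mul_one_div_cancel hqne, ENNReal.rpow_one]

/-- For `1 < p < ∞`, `1/p + 1/q = 1`, and a non-increasing positive weight `w`
with `W` finite, if `N(f) < ∞` then
`N(f) = inf { (∫_I (g*)^q w^{1−q})^{1/q} : g* locally integrable, f ≺ g }`. -/
theorem stmt_17 (a : ℝ≥0∞) (ha : 0 < a) (w : ℝ → ℝ)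
    (hw_pos : ∀ x ∈ Iset a, 0 < w x) (hw_anti : AntitoneOn w (Iset a)) (hw_meas : Measurable w)
    (hW_fin : ∀ t ∈ Iset a, ∫⁻ s in Set.Ioo 0 t, ENNReal.ofReal (w s) ≠ ∞)
    (p q : ℝ) (hp : 1 < p) (hpq : 1/p + 1/q = 1)
    (f : ℝ → ℝ) (hf : Measurable f)
    (hfin : lorentzDualNorm a w p f ≠ ∞) :
    lorentzDualNorm a w p f
      = sInf {c : ℝ≥0∞ | ∃ g : ℝ → ℝ, Measurable g ∧
          (∀ x : ℝ, 0 < x → ∫⁻ t in Set.Ioo 0 x, rearr (volI a) g t ≠ ∞) ∧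
          (∀ x : ℝ, 0 < x →
            ∫⁻ t in Set.Ioo 0 x, rearr (volI a) f t ≤ ∫⁻ t in Set.Ioo 0 x, rearr (volI a) g t) ∧
          c = (∫⁻ t in Iset a,
                rearr (volI a) g t ^ q * ENNReal.ofReal (w t) ^ (1 - q)) ^ (1/q)} := by
  apply le_antisymm
  · refine le_sInf ?_
    rintro c ⟨g, hg, _, hfg, rfl⟩
    exact easy_dir a w hw_pos hw_meas p q hp hpq f g hf hfg
  · obtain ⟨g, hg, hloc, hfg, hle⟩ :=
      hard_dir a ha w hw_pos hw_anti hw_meas hW_fin p q hp hpq f hf hfin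
    refine le_trans (sInf_le ?_) hle
    exact ⟨g, hg, hloc, hfg, rfl⟩
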